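/- arXiv:1410.6867 — 2 statements merged into one kernel-verified Lean document; each statement's English description precedes it below -/
import Mathlib

section
/- Let p, q, r be distinct primes and G = C_p ⊕ C_q ⊕ C_r. If S is a zero-sum free sequence over G with k(S) = k(G), then S = S_p · S_q · S_r where S_p, S_q, S_r are zero-sum free sequences over the p-primary, q-primary, and r-primary components of G respectively; in particular every element of S lies in one of the three cyclic direct summands. -/
/-- The cross number `k(S)` of a sequence (finite multiset) `S` over an additive group:
the sum, with multiplicity, of the reciprocals of the orders of its elements. -/
noncomputable def crossNum {G : Type*} [AddCommGroup G] (S : Multiset G) : ℝ :=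
  (S.map fun g => ((addOrderOf g : ℝ))⁻¹).sum

/-- `S` is zero-sum free: no nonempty sub-multiset of `S` has sum `0`. -/
def IsZeroSumFree {G : Type*} [AddCommGroup G] (S : Multiset G) : Prop :=
  ∀ T : Multiset G, T ≤ S → T ≠ 0 → T.sum ≠ 0

/-- The little cross number `k(G)`: the maximal cross number of a zero-sum free
sequence over `G`. -/
noncomputable def littleK (G : Type*) [AddCommGroup G] : ℝ :=
  sSup {x : ℝ | ∃ S : Multiset G, IsZeroSumFree S ∧ crossNum S = x}

open Multiset
variable {G : Type*} [AddCommGroup G]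
lemma davenport_list [Finite G] (n : ℕ) (A : Finset G) (hA : A.card ≤ n) (h0 : (0:G) ∈ A)
    (hadd : ∀ x ∈ A, ∀ y ∈ A, x + y ∈ A)
    (T : List G) (hT : ∀ g ∈ T, g ∈ A) (hn : n ≤ T.length) :
    ∃ U : List G, U.Sublist T ∧ U ≠ [] ∧ U.sum = 0 := by
  have key : ∃ i ∈ Finset.range (n+1), ∃ j ∈ Finset.range (n+1), i ≠ j ∧
      (T.take i).sum = (T.take j).sum := by
    apply Finset.exists_ne_map_eq_of_card_lt_of_maps_to (t := A)
    · simp; omega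
    · intro i _
      show (T.take i).sum ∈ A
      have : ∀ L : List G, (∀ g ∈ L, g ∈ A) → L.sum ∈ A := by
        intro L
        induction L with
        | nil => simpa using h0
        | cons a L ih =>
          intro h
          simp only [List.sum_cons]
          exact hadd _ (h a (by simp)) _ (ih fun g hg => h g (by simp [hg]))
      exact this _ fun g hg => hT g (List.mem_of_mem_take hg)
  obtain ⟨i, hi, j, hj, hij, he⟩ := key
  wlog hlt : i < j generalizing i j
  · exact this j hj i hi hij.symm he.symm (by omega)
  simp only [Finset.mem_range] at hi hj
  refine ⟨(T.take j).drop i, (List.drop_sublist _ _).trans (List.take_sublist _ _), ?_, ?_⟩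
  · intro h
    have := congrArg List.length h
    simp at this
    omega
  · have h2 := List.sum_take_add_sum_drop (T.take j) i
    rw [List.take_take, min_eq_left hlt.le, he] at h2
    simpa using h2

/-- Davenport property for prime torsion. -/
def DavProp (G : Type*) [AddCommGroup G] : Prop :=
  ∀ p : ℕ, p.Prime → ∀ T : Multiset G, (∀ g ∈ T, p • g = 0) → p ≤ card T →
    ∃ U ≤ T, U ≠ 0 ∧ U.sum = 0

lemma davProp_of_cyclic [Finite G] [IsAddCyclic G] : DavProp G := by
  classical
  have := Fintype.ofFinite G
  intro p hp T hT hc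
  have := IsAddCyclic.card_nsmul_eq_zero_le (α := G) hp.pos
  obtain ⟨U, h1, h2, h3⟩ := davenport_list (G := G) p (Finset.univ.filter fun a : G => p • a = 0) this (by simp)
    (by intro x hx y hy; simp at *; rw [hx, hy, add_zero]) T.toList (by simpa using hT) (by simpa using hc)
  refine ⟨U, ?_, by simpa using h2, by simpa using h3⟩
  rw [← T.coe_toList]
  exact Multiset.coe_le.2 h1.subperm


lemma ms_exists_le_card {α : Type*} {S : Multiset α} {n : ℕ} (h : n ≤ card S) : ∃ T ≤ S, card T = n := by
  refine ⟨(S.toList.take n : List α), ?_, by simpa using h⟩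
  conv_rhs => rw [← S.coe_toList]
  exact Multiset.coe_le.2 (List.take_sublist _ _).subperm

lemma ms_le_map {α β : Type*} {f : α → β} {T : Multiset α} {V : Multiset β} (h : V ≤ T.map f) :
    ∃ U ≤ T, U.map f = V := by
  induction T using Multiset.induction_on generalizing V with
  | empty => exact ⟨0, le_rfl, by simpa using (Multiset.le_zero.1 (by simpa using h)).symm⟩
  | cons a T ih =>
    rw [Multiset.map_cons] at h
    by_cases ha : f a ∈ V
    · obtain ⟨W, rfl⟩ := Multiset.exists_cons_of_mem ha
      obtain ⟨U, hU, rfl⟩ := ih ((Multiset.cons_le_cons_iff _).1 h)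
      exact ⟨a ::ₘ U, (Multiset.cons_le_cons_iff _).2 hU, by simp⟩
    · obtain ⟨U, hU, rfl⟩ := ih ((Multiset.le_cons_of_notMem ha).1 h)
      exact ⟨U, hU.trans (Multiset.le_cons_self _ _), rfl⟩

/-- number of terms of order `d`. -/
noncomputable def cnt (S : Multiset G) (d : ℕ) : ℕ := S.countP (fun g => addOrderOf g = d)

noncomputable def kstar (m : ℕ) : ℝ := ∑ x ∈ m.primeFactors, (1 - (x:ℝ)⁻¹)

lemma crossNum_add (S T : Multiset G) : crossNum (S + T) = crossNum S + crossNum T := by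
  simp [crossNum]

lemma crossNum_cons (g : G) (T : Multiset G) : crossNum (g ::ₘ T) = (addOrderOf g : ℝ)⁻¹ + crossNum T := by
  simp [crossNum]

lemma crossNum_const (T : Multiset G) (d : ℕ) (h : ∀ g ∈ T, addOrderOf g = d) :
    crossNum T = card T * (d:ℝ)⁻¹ := by
  unfold crossNum
  rw [Multiset.map_congr rfl (g := fun _ => (d:ℝ)⁻¹) (fun g hg => by rw [h g hg])]
  simp

lemma crossNum_eq_sum (D : Finset ℕ) (S : Multiset G) (h : ∀ g ∈ S, addOrderOf g ∈ D) :
    crossNum S = ∑ d ∈ D, (cnt S d : ℝ) * (d:ℝ)⁻¹ := by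
  classical
  induction S using Multiset.induction_on with
  | empty => simp [crossNum, cnt]
  | cons g S ih =>
    rw [crossNum_cons, ih (fun x hx => h x (by simp [hx]))]
    have : ∀ d, (cnt (g ::ₘ S) d : ℝ) * (d:ℝ)⁻¹ = (if addOrderOf g = d then (d:ℝ)⁻¹ else 0) + cnt S d * (d:ℝ)⁻¹ := by
      intro d
      unfold cnt
      rw [Multiset.countP_cons]
      split_ifs <;> push_cast <;> ring
    rw [Finset.sum_congr rfl (fun d _ => this d), Finset.sum_add_distrib, Finset.sum_ite_eq,
      if_pos (h g (by simp))]

lemma zsf_mono {S T : Multiset G} (hS : IsZeroSumFree S) (h : T ≤ S) : IsZeroSumFree T :=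
  fun U hU => hS U (hU.trans h)

lemma cnt_lt (hD : DavProp G) {S : Multiset G} (hS : IsZeroSumFree S) {x : ℕ} (hx : x.Prime) :
    cnt S x < x := by
  by_contra hc
  push Not at hc
  obtain ⟨U, h1, h2, h3⟩ := hD x hx (S.filter (fun g => addOrderOf g = x)) (by
    intro g hg
    rw [Multiset.mem_filter] at hg
    exact addOrderOf_dvd_iff_nsmul_eq_zero.1 hg.2.dvd) (by rwa [cnt, Multiset.countP_eq_card_filter] at hc)
  exact hS U (h1.trans (Multiset.filter_le _ _)) h2 h3

lemma cnt_one {S : Multiset G} (hS : IsZeroSumFree S) : cnt S 1 = 0 := by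
  rw [cnt, Multiset.countP_eq_zero]
  intro g hg h
  rw [AddMonoid.addOrderOf_eq_one_iff] at h
  exact hS {g} (by simpa using hg) (by simp) (by simpa using h)

lemma allprime_le (hD : DavProp G) {S : Multiset G} (hS : IsZeroSumFree S) {m : ℕ} (hm : m ≠ 0)
    (h1 : ∀ g ∈ S, addOrderOf g ∣ m) (h2 : ∀ g ∈ S, (addOrderOf g).Prime) :
    crossNum S ≤ kstar m ∧ (kstar m ≤ crossNum S → ∀ x ∈ m.primeFactors, cnt S x + 1 = x) := by
  have e := crossNum_eq_sum m.primeFactors S (fun g hg => by simp [h1 g hg, h2 g hg, hm])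
  have hle : ∀ x ∈ m.primeFactors, (cnt S x : ℝ) * (x:ℝ)⁻¹ ≤ 1 - (x:ℝ)⁻¹ := by
    intro x hx
    have hp := Nat.prime_of_mem_primeFactors hx
    have h := cnt_lt hD hS hp
    have h' : (cnt S x : ℝ) + 1 ≤ x := by exact_mod_cast h
    have h0 : (0:ℝ) < x := by exact_mod_cast hp.pos
    have h3 : ((cnt S x : ℝ) + 1) * (x:ℝ)⁻¹ ≤ 1 := by
      rw [← div_eq_mul_inv, div_le_one h0]; exact h'
    linarith
  refine ⟨by rw [e]; exact Finset.sum_le_sum hle, fun hk => ?_⟩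
  rw [e] at hk
  have heq := (Finset.sum_eq_sum_iff_of_le hle).1 (le_antisymm (Finset.sum_le_sum hle) hk)
  intro x hx
  have h := heq x hx
  have h0 : (x:ℝ) ≠ 0 := by exact_mod_cast (Nat.prime_of_mem_primeFactors hx).ne_zero
  field_simp at h
  have : (cnt S x : ℝ) + 1 = x := by linarith
  exact_mod_cast this

/-- merging step -/
lemma reduce_step (hD : DavProp G) {S : Multiset G} {d x : ℕ} (hd : d ≠ 0)
    (hx : x.Prime) (hxd : x ∣ d) (hc : x ≤ cnt S d) :
    ∃ U ≤ S, 2 ≤ card U ∧ (∀ g ∈ U, addOrderOf g = d) ∧ addOrderOf U.sum ∣ d / x ∧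
      crossNum U ≤ (addOrderOf U.sum : ℝ)⁻¹ := by
  classical
  rw [cnt, Multiset.countP_eq_card_filter] at hc
  obtain ⟨T, hT, hTc⟩ := ms_exists_le_card hc
  have hTd : ∀ g ∈ T, addOrderOf g = d := fun g hg => (Multiset.mem_filter.1 (Multiset.mem_of_le hT hg)).2
  obtain ⟨e, rfl⟩ := hxd
  have hx0 := hx.pos
  have he0 : 0 < e := Nat.pos_of_ne_zero (by rintro rfl; simp at hd)
  obtain ⟨V, h1, h2, h3⟩ := hD x hx (T.map (fun g => e • g)) (by
    intro g hg
    obtain ⟨a, ha, rfl⟩ := Multiset.mem_map.1 hg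
    rw [← mul_nsmul', ← hTd a ha]
    exact addOrderOf_nsmul_eq_zero a) (by simp [hTc])
  obtain ⟨U, hU, rfl⟩ := ms_le_map h1
  have hU0 : U ≠ 0 := by rintro rfl; simp at h2
  have hUS : U ≤ S := hU.trans (hT.trans (Multiset.filter_le _ _))
  have hUd : ∀ g ∈ U, addOrderOf g = x * e := fun g hg => hTd g (Multiset.mem_of_le hU hg)
  have hs : addOrderOf U.sum ∣ e := by
    rw [addOrderOf_dvd_iff_nsmul_eq_zero]
    rw [Multiset.sum_map_nsmul] at h3
    simpa using h3
  refine ⟨U, hUS, ?_, hUd, by rwa [Nat.mul_div_cancel_left _ hx0], ?_⟩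
  · by_contra hlt
    have h1 : card U = 1 := by
      have := Multiset.card_pos.2 hU0
      omega
    obtain ⟨u, rfl⟩ := Multiset.card_eq_one.1 h1
    rw [Multiset.sum_singleton, hUd u (by simp)] at hs
    have := Nat.le_of_dvd he0 hs
    have := hx.two_le
    nlinarith
  · rw [crossNum_const U _ hUd]
    have hcU : (card U : ℝ) ≤ x := by exact_mod_cast (Multiset.card_le_card hU).trans_eq hTc
    have ho : (addOrderOf U.sum : ℝ) ≤ e := by exact_mod_cast Nat.le_of_dvd he0 hs
    have ho0 : (0:ℝ) < addOrderOf U.sum := by exact_mod_cast Nat.pos_of_dvd_of_pos hs he0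
    have hxr : (0:ℝ) < x := by exact_mod_cast hx0
    calc (card U : ℝ) * ((x * e : ℕ) : ℝ)⁻¹ ≤ x * ((x * e : ℕ) : ℝ)⁻¹ := by gcongr
      _ = (e : ℝ)⁻¹ := by push_cast; field_simp
      _ ≤ _ := by gcongr

lemma zsf_merge [DecidableEq G] {S U : Multiset G} (hS : IsZeroSumFree S) (hU : U ≤ S) (hU0 : U ≠ 0) :
    IsZeroSumFree (U.sum ::ₘ (S - U)) := by
  intro V hV hV0 hs
  by_cases h : U.sum ∈ V
  · obtain ⟨W, rfl⟩ := Multiset.exists_cons_of_mem h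
    have hW : W ≤ S - U := (Multiset.cons_le_cons_iff _).1 hV
    refine hS (U + W) ?_ ?_ ?_
    · calc U + W ≤ U + (S - U) := by gcongr
        _ = S := by rw [add_comm]; exact Multiset.sub_add_cancel hU
    · intro h; rw [add_eq_zero] at h; exact hU0 h.1
    · simpa using hs
  · exact hS V (((Multiset.le_cons_of_notMem h).1 hV).trans (Multiset.sub_le_self _ _)) hV0 hs

/-- quotient step -/
lemma zsf_quot (hD : DavProp G) {S : Multiset G} (hS : IsZeroSumFree S) {x : ℕ} (hx : x.Prime)
    (hc : x ≤ cnt S x + 1) :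
    IsZeroSumFree ((S.filter (fun g => ¬ addOrderOf g = x)).map (fun g => x • g)) := by
  classical
  intro V hV hV0 hs
  obtain ⟨W, hW, rfl⟩ := ms_le_map hV
  rw [Multiset.sum_map_nsmul, Multiset.map_id'] at hs
  have hW0 : W ≠ 0 := by rintro rfl; simp at hV0
  set A := S.filter (fun g => addOrderOf g = x) with hA
  have hSum : A + S.filter (fun g => ¬ addOrderOf g = x) = S := Multiset.filter_add_not _ _
  obtain ⟨U, h1, h2, h3⟩ := hD x hx (W.sum ::ₘ A) (by
    intro g hg
    rcases Multiset.mem_cons.1 hg with rfl | hg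
    · exact hs
    · exact addOrderOf_dvd_iff_nsmul_eq_zero.1 (Multiset.mem_filter.1 hg).2.dvd) (by
      rw [cnt, Multiset.countP_eq_card_filter] at hc
      simpa using hc)
  by_cases h : W.sum ∈ U
  · obtain ⟨U', rfl⟩ := Multiset.exists_cons_of_mem h
    have hU' : U' ≤ A := (Multiset.cons_le_cons_iff _).1 h1
    refine hS (U' + W) ?_ ?_ ?_
    · rw [← hSum]; gcongr
    · intro h; rw [add_eq_zero] at h; exact hW0 h.2
    · rw [Multiset.sum_cons] at h3
      rw [Multiset.sum_add, add_comm]; exact h3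
  · exact hS U (((Multiset.le_cons_of_notMem h).1 h1).trans (Multiset.filter_le _ _)) h2 h3

lemma kstar_mul {x e : ℕ} (hx : x.Prime) (hc : x.Coprime e) :
    kstar (x * e) = (1 - (x:ℝ)⁻¹) + kstar e := by
  unfold kstar
  rw [hc.primeFactors_mul, Finset.sum_union hc.disjoint_primeFactors, hx.primeFactors,
    Finset.sum_singleton]

lemma quot_step (hD : DavProp G) {S : Multiset G} (hS : IsZeroSumFree S) {x e : ℕ} (hx : x.Prime)
    (he0 : e ≠ 0) (hco : x.Coprime e) (hc : x ≤ cnt S x + 1)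
    (hord : ∀ g ∈ S, addOrderOf g ∣ x * e)
    (hk : kstar (x * e) ≤ crossNum S)
    (ih : ∀ C : Multiset G, IsZeroSumFree C → (∀ g ∈ C, addOrderOf g ∣ e) →
      kstar e ≤ crossNum C → ∀ g ∈ C, (addOrderOf g).Prime) :
    ∀ g ∈ S, (addOrderOf g).Prime := by
  classical
  set A := S.filter (fun g => addOrderOf g = x) with hA
  set B := S.filter (fun g => ¬ addOrderOf g = x) with hB
  have hAB : A + B = S := Multiset.filter_add_not _ _
  have hBS : B ≤ S := Multiset.filter_le _ _
  set C := B.map (fun g => x • g) with hC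
  have hCz : IsZeroSumFree C := zsf_quot hD hS hx hc
  have hCo : ∀ g ∈ C, addOrderOf g ∣ e := by
    intro g hg
    obtain ⟨b, hb, rfl⟩ := Multiset.mem_map.1 hg
    rw [addOrderOf_dvd_iff_nsmul_eq_zero, ← mul_nsmul]
    exact addOrderOf_dvd_iff_nsmul_eq_zero.1 (hord b (Multiset.mem_of_le hBS hb))
  have hkA : crossNum A ≤ 1 - (x:ℝ)⁻¹ := by
    have h := (allprime_le hD (zsf_mono hS (Multiset.filter_le (fun g => addOrderOf g = x) S))
      hx.ne_zero (fun g hg => (Multiset.mem_filter.1 hg).2.dvd)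
      (fun g hg => by rw [(Multiset.mem_filter.1 hg).2]; exact hx)).1
    simpa [kstar, hx.primeFactors] using h
  have hkB : kstar e ≤ crossNum B := by
    rw [kstar_mul hx hco, ← hAB, crossNum_add] at hk
    linarith
  have hCe : crossNum C = (B.map (fun g => (addOrderOf (x • g) : ℝ)⁻¹)).sum := by
    rw [crossNum, hC, Multiset.map_map]; rfl
  have hpos : ∀ b ∈ B, 0 < addOrderOf (x • b) := fun b hb =>
    Nat.pos_of_dvd_of_pos (hCo _ (Multiset.mem_map_of_mem _ hb)) (Nat.pos_of_ne_zero he0)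
  have hposB : ∀ b ∈ B, 0 < addOrderOf b := fun b hb =>
    Nat.pos_of_dvd_of_pos (hord b (Multiset.mem_of_le hBS hb)) (Nat.mul_pos hx.pos (Nat.pos_of_ne_zero he0))
  have hnle : ∀ b ∈ B, addOrderOf (x • b) ≤ addOrderOf b := fun b hb =>
    Nat.le_of_dvd (hposB b hb) (addOrderOf_smul_dvd x)
  have hle : ∀ b ∈ B, (addOrderOf b : ℝ)⁻¹ ≤ (addOrderOf (x • b) : ℝ)⁻¹ := by
    intro b hb
    have h1 : (0:ℝ) < addOrderOf (x • b) := by exact_mod_cast hpos b hb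
    have h2 : (addOrderOf (x • b) : ℝ) ≤ addOrderOf b := by exact_mod_cast hnle b hb
    gcongr
  have hkBC : crossNum B ≤ crossNum C := by
    rw [hCe]; exact Multiset.sum_map_le_sum_map _ _ hle
  have hCp := ih C hCz hCo (hkB.trans hkBC)
  have hkC := (allprime_le hD hCz he0 hCo hCp).1
  intro g hg
  rw [← hAB, Multiset.mem_add] at hg
  rcases hg with hg | hg
  · rw [(Multiset.mem_filter.1 hg).2]; exact hx
  · have heq : addOrderOf (x • g) = addOrderOf g := by
      by_contra hne
      have hlt : addOrderOf (x • g) < addOrderOf g := lt_of_le_of_ne (hnle g hg) hne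
      have h1 : (0:ℝ) < addOrderOf (x • g) := by exact_mod_cast hpos g hg
      have h2 : (addOrderOf (x • g) : ℝ) < addOrderOf g := by exact_mod_cast hlt
      have : crossNum B < crossNum C := by
        rw [hCe]; exact Multiset.sum_lt_sum hle ⟨g, hg, by gcongr⟩
      linarith
    rw [← heq]; exact hCp _ (Multiset.mem_map_of_mem _ hg)

lemma term_le {a d k : ℕ} (hd : 0 < d) (h : a ≤ k) : (a:ℝ) * (d:ℝ)⁻¹ ≤ k * (d:ℝ)⁻¹ := by
  gcongr

lemma minFac_mul_le {p q : ℕ} (hp : p.Prime) : (p * q).minFac ≤ p :=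
  Nat.minFac_le_of_dvd hp.two_le (dvd_mul_right _ _)

lemma counting3 {p q r : ℕ} (hp : p.Prime) (hq : q.Prime) (hr : r.Prime) (h1 : p < q) (h2 : q < r)
    (a : ℕ → ℕ) (ha1 : a 1 = 0) (hap : ∀ x, x.Prime → x ∣ p * (q * r) → a x + 2 ≤ x)
    (had : ∀ d, d ∣ p * (q * r) → d ≠ 1 → ¬ d.Prime → a d < d.minFac) :
    ∑ d ∈ (p * (q * r)).divisors, (a d : ℝ) * (d:ℝ)⁻¹ < kstar (p * (q * r)) := by
  have cpq : p.Coprime q := (Nat.coprime_primes hp hq).2 h1.ne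
  have cpr : p.Coprime r := (Nat.coprime_primes hp hr).2 (h1.trans h2).ne
  have cqr : q.Coprime r := (Nat.coprime_primes hq hr).2 h2.ne
  have p2 := hp.two_le
  have ks : kstar (p * (q * r)) = (1 - (p:ℝ)⁻¹) + ((1 - (q:ℝ)⁻¹) + (1 - (r:ℝ)⁻¹)) := by
    rw [kstar_mul hp (cpq.mul_right cpr), kstar_mul hq cqr]
    simp [kstar, hr.primeFactors]
  have dv : (p * (q * r)).divisors ⊆ {1, p, q, r, p * q, p * r, q * r, p * (q * r)} := by
    rw [Nat.divisors_mul, Nat.divisors_mul, hp.divisors, hq.divisors, hr.divisors]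
    intro d hd
    simp only [Finset.mem_mul, Finset.mem_insert, Finset.mem_singleton] at hd ⊢
    obtain ⟨y, hy, z, ⟨u, hu, v, hv, rfl⟩, rfl⟩ := hd
    rcases hy with rfl | rfl <;> rcases hu with rfl | rfl <;> rcases hv with rfl | rfl <;> simp
  have P := hap p hp (dvd_mul_right _ _)
  have Q := hap q hq (Dvd.intro_left p (by ring) |>.trans (Nat.mul_dvd_mul_left p (dvd_mul_right q r)))
  have R := hap r hr ((dvd_mul_left r q).trans (dvd_mul_left _ _))
  have npr : ∀ x y : ℕ, x.Prime → y.Prime → ¬ (x * y).Prime := fun x y hx hy =>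
    Nat.not_prime_mul hx.ne_one hy.ne_one
  have n1 : ∀ x y : ℕ, x.Prime → x * y ≠ 1 := fun x y hx h => hx.ne_one (Nat.eq_one_of_mul_eq_one_right h)
  have PQ := (had (p * q) ⟨r, by ring⟩ (n1 _ _ hp) (npr _ _ hp hq)).trans_le (minFac_mul_le hp)
  have PR := (had (p * r) ⟨q, by ring⟩ (n1 _ _ hp) (npr _ _ hp hr)).trans_le (minFac_mul_le hp)
  have QR := (had (q * r) ⟨p, by ring⟩ (n1 _ _ hq) (npr _ _ hq hr)).trans_le (minFac_mul_le hq)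
  have PQR := (had (p * (q * r)) dvd_rfl (n1 _ _ hp) (Nat.not_prime_mul hp.ne_one (n1 _ _ hq))).trans_le
    (minFac_mul_le hp)
  have sumle : ∑ d ∈ (p * (q * r)).divisors, (a d : ℝ) * (d:ℝ)⁻¹ ≤
      (a p : ℝ) * (p:ℝ)⁻¹ + a q * (q:ℝ)⁻¹ + a r * (r:ℝ)⁻¹ + a (p * q) * ((p * q : ℕ):ℝ)⁻¹ +
       a (p * r) * ((p * r : ℕ):ℝ)⁻¹ + a (q * r) * ((q * r : ℕ):ℝ)⁻¹ +
       a (p * (q * r)) * ((p * (q * r) : ℕ):ℝ)⁻¹ := by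
    have ins : ∀ (x : ℕ) (s : Finset ℕ), ∑ d ∈ insert x s, (a d : ℝ) * (d:ℝ)⁻¹ ≤
        (a x : ℝ) * (x:ℝ)⁻¹ + ∑ d ∈ s, (a d : ℝ) * (d:ℝ)⁻¹ := by
      intro x s
      by_cases hxs : x ∈ s
      · rw [Finset.insert_eq_of_mem hxs]
        have : (0:ℝ) ≤ (a x : ℝ) * (x:ℝ)⁻¹ := by positivity
        linarith
      · rw [Finset.sum_insert hxs]
    refine (Finset.sum_le_sum_of_subset_of_nonneg dv (fun i _ _ => by positivity)).trans ?_
    refine (ins _ _).trans ?_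
    rw [ha1]
    have i1 := ins p {q, r, p * q, p * r, q * r, p * (q * r)}
    have i2 := ins q {r, p * q, p * r, q * r, p * (q * r)}
    have i3 := ins r {p * q, p * r, q * r, p * (q * r)}
    have i4 := ins (p * q) {p * r, q * r, p * (q * r)}
    have i5 := ins (p * r) {q * r, p * (q * r)}
    have i6 := ins (q * r) {p * (q * r)}
    rw [Finset.sum_singleton] at i6
    simp only [Nat.cast_zero, zero_mul, zero_add]
    linarith
  rw [ks]
  refine sumle.trans_lt ?_
  have P' : (a p : ℝ) + 2 ≤ p := by exact_mod_cast P
  have Q' : (a q : ℝ) + 2 ≤ q := by exact_mod_cast Q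
  have R' : (a r : ℝ) + 2 ≤ r := by exact_mod_cast R
  have PQ' : (a (p * q) : ℝ) + 1 ≤ p := by exact_mod_cast PQ
  have PR' : (a (p * r) : ℝ) + 1 ≤ p := by exact_mod_cast PR
  have QR' : (a (q * r) : ℝ) + 1 ≤ q := by exact_mod_cast QR
  have PQR' : (a (p * (q * r)) : ℝ) + 1 ≤ p := by exact_mod_cast PQR
  have p0 : (0:ℝ) < p := by exact_mod_cast hp.pos
  have q0 : (0:ℝ) < q := by exact_mod_cast hq.pos
  have r0 : (0:ℝ) < r := by exact_mod_cast hr.pos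
  have h2' : (q:ℝ) < r := by exact_mod_cast h2
  have h1' : (p:ℝ) < q := by exact_mod_cast h1
  generalize (a p : ℝ) = x1 at *
  generalize (a q : ℝ) = x2 at *
  generalize (a r : ℝ) = x3 at *
  generalize (a (p * q) : ℝ) = x4 at *
  generalize (a (p * r) : ℝ) = x5 at *
  generalize (a (q * r) : ℝ) = x6 at *
  generalize (a (p * (q * r)) : ℝ) = x7 at *
  clear sumle dv
  push_cast
  generalize (p : ℝ) = P at *
  generalize (q : ℝ) = Q at *
  generalize (r : ℝ) = R at *
  have e1 : 1 - P⁻¹ + (1 - Q⁻¹ + (1 - R⁻¹)) - (x1 * P⁻¹ + x2 * Q⁻¹ + x3 * R⁻¹ + x4 * (P * Q)⁻¹ +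
      x5 * (P * R)⁻¹ + x6 * (Q * R)⁻¹ + x7 * (P * (Q * R))⁻¹) =
      ((P - 1 - x1) * (Q * R) + (Q - 1 - x2) * (P * R) + (R - 1 - x3) * (P * Q) - x4 * R - x5 * Q
        - x6 * P - x7) / (P * Q * R) := by
    field_simp
    ring
  have : 0 < ((P - 1 - x1) * (Q * R) + (Q - 1 - x2) * (P * R) + (R - 1 - x3) * (P * Q) - x4 * R - x5 * Q
        - x6 * P - x7) / (P * Q * R) := by
    apply div_pos _ (by positivity)
    have b1 : 1 * (Q * R) ≤ (P - 1 - x1) * (Q * R) := mul_le_mul_of_nonneg_right (by linarith) (by positivity)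
    have b2 : 1 * (P * R) ≤ (Q - 1 - x2) * (P * R) := mul_le_mul_of_nonneg_right (by linarith) (by positivity)
    have b3 : 1 * (P * Q) ≤ (R - 1 - x3) * (P * Q) := mul_le_mul_of_nonneg_right (by linarith) (by positivity)
    have b4 : x4 * R ≤ (P - 1) * R := mul_le_mul_of_nonneg_right (by linarith) (by positivity)
    have b5 : x5 * Q ≤ (P - 1) * Q := mul_le_mul_of_nonneg_right (by linarith) (by positivity)
    have b6 : x6 * P ≤ (Q - 1) * P := mul_le_mul_of_nonneg_right (by linarith) (by positivity)
    have b7 : P * Q ≤ Q * R := by nlinarith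
    nlinarith
  linarith

lemma counting2 {p q : ℕ} (hp : p.Prime) (hq : q.Prime) (h1 : p < q)
    (a : ℕ → ℕ) (ha1 : a 1 = 0) (hap : ∀ x, x.Prime → x ∣ p * q → a x + 2 ≤ x)
    (had : ∀ d, d ∣ p * q → d ≠ 1 → ¬ d.Prime → a d < d.minFac) :
    ∑ d ∈ (p * q).divisors, (a d : ℝ) * (d:ℝ)⁻¹ < kstar (p * q) := by
  have cpq : p.Coprime q := (Nat.coprime_primes hp hq).2 h1.ne
  have p2 := hp.two_le
  have ks : kstar (p * q) = (1 - (p:ℝ)⁻¹) + (1 - (q:ℝ)⁻¹) := by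
    rw [kstar_mul hp cpq]
    simp [kstar, hq.primeFactors]
  have dv : (p * q).divisors ⊆ {1, p, q, p * q} := by
    rw [Nat.divisors_mul, hp.divisors, hq.divisors]
    intro d hd
    simp only [Finset.mem_mul, Finset.mem_insert, Finset.mem_singleton] at hd ⊢
    obtain ⟨u, hu, v, hv, rfl⟩ := hd
    rcases hu with rfl | rfl <;> rcases hv with rfl | rfl <;> simp
  have P := hap p hp (dvd_mul_right _ _)
  have Q := hap q hq (dvd_mul_left _ _)
  have PQ := (had (p * q) dvd_rfl (fun h => hp.ne_one (Nat.eq_one_of_mul_eq_one_right h))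
    (Nat.not_prime_mul hp.ne_one hq.ne_one)).trans_le (minFac_mul_le hp)
  have sumle : ∑ d ∈ (p * q).divisors, (a d : ℝ) * (d:ℝ)⁻¹ ≤
      (a p : ℝ) * (p:ℝ)⁻¹ + a q * (q:ℝ)⁻¹ + a (p * q) * ((p * q : ℕ):ℝ)⁻¹ := by
    have ins : ∀ (x : ℕ) (s : Finset ℕ), ∑ d ∈ insert x s, (a d : ℝ) * (d:ℝ)⁻¹ ≤
        (a x : ℝ) * (x:ℝ)⁻¹ + ∑ d ∈ s, (a d : ℝ) * (d:ℝ)⁻¹ := by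
      intro x s
      by_cases hxs : x ∈ s
      · rw [Finset.insert_eq_of_mem hxs]
        have : (0:ℝ) ≤ (a x : ℝ) * (x:ℝ)⁻¹ := by positivity
        linarith
      · rw [Finset.sum_insert hxs]
    refine (Finset.sum_le_sum_of_subset_of_nonneg dv (fun i _ _ => by positivity)).trans ?_
    refine (ins _ _).trans ?_
    rw [ha1]
    have i1 := ins p {q, p * q}
    have i2 := ins q {p * q}
    rw [Finset.sum_singleton] at i2
    simp only [Nat.cast_zero, zero_mul, zero_add]
    linarith
  rw [ks]
  refine sumle.trans_lt ?_
  have P' : (a p : ℝ) + 2 ≤ p := by exact_mod_cast P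
  have Q' : (a q : ℝ) + 2 ≤ q := by exact_mod_cast Q
  have PQ' : (a (p * q) : ℝ) + 1 ≤ p := by exact_mod_cast PQ
  have p0 : (0:ℝ) < p := by exact_mod_cast hp.pos
  have q0 : (0:ℝ) < q := by exact_mod_cast hq.pos
  generalize (a p : ℝ) = x1 at *
  generalize (a q : ℝ) = x2 at *
  generalize (a (p * q) : ℝ) = x4 at *
  clear sumle dv
  push_cast
  generalize (p : ℝ) = P at *
  generalize (q : ℝ) = Q at *
  have e1 : 1 - P⁻¹ + (1 - Q⁻¹) - (x1 * P⁻¹ + x2 * Q⁻¹ + x4 * (P * Q)⁻¹) =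
      ((P - 1 - x1) * Q + (Q - 1 - x2) * P - x4) / (P * Q) := by
    field_simp
    ring
  have : 0 < ((P - 1 - x1) * Q + (Q - 1 - x2) * P - x4) / (P * Q) := by
    apply div_pos _ (by positivity)
    have b1 : 1 * Q ≤ (P - 1 - x1) * Q := mul_le_mul_of_nonneg_right (by linarith) (by positivity)
    have b2 : 1 * P ≤ (Q - 1 - x2) * P := mul_le_mul_of_nonneg_right (by linarith) (by positivity)
    linarith
  linarith

/-- The inductive claim. -/
def Claim (G : Type*) [AddCommGroup G] (m : ℕ) : Prop :=
  ∀ S : Multiset G, IsZeroSumFree S → (∀ g ∈ S, addOrderOf g ∣ m) →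
      kstar m ≤ crossNum S → ∀ g ∈ S, (addOrderOf g).Prime

lemma core (hD : DavProp G) {m : ℕ} (hm : m ≠ 0)
    (hcount : ∀ a : ℕ → ℕ, a 1 = 0 → (∀ x, x.Prime → x ∣ m → a x + 2 ≤ x) →
      (∀ d, d ∣ m → d ≠ 1 → ¬ d.Prime → a d < d.minFac) →
      ∑ d ∈ m.divisors, (a d : ℝ) * (d:ℝ)⁻¹ < kstar m)
    (hquot : ∀ x e, x.Prime → m = x * e → x.Coprime e ∧ Claim G e) : Claim G m := by
  classical
  have main : ∀ n, ∀ S : Multiset G, card S = n → IsZeroSumFree S → (∀ g ∈ S, addOrderOf g ∣ m) →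
      kstar m ≤ crossNum S → ∀ g ∈ S, (addOrderOf g).Prime := by
    intro n
    induction n using Nat.strong_induction_on with
    | _ n IH =>
    intro S hn hS hord hk
    by_cases hfull : ∃ x, x.Prime ∧ x ∣ m ∧ x ≤ cnt S x + 1
    · obtain ⟨x, hx, ⟨e, rfl⟩, hc⟩ := hfull
      obtain ⟨hco, hcl⟩ := hquot x e hx rfl
      exact quot_step hD hS hx (by rintro rfl; simp at hm) hco hc hord hk hcl
    exfalso
    by_cases hred : ∃ d, d ∣ m ∧ d ≠ 1 ∧ ¬ d.Prime ∧ d.minFac ≤ cnt S d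
    · obtain ⟨d, hdm, hd1, hdp, hc⟩ := hred
      have hd0 : d ≠ 0 := by rintro rfl; exact hm (by simpa using hdm)
      have hx := Nat.minFac_prime hd1
      obtain ⟨U, hUS, hU2, hUd, hUo, hUk⟩ := reduce_step hD hd0 hx d.minFac_dvd hc
      have hU0 : U ≠ 0 := by rintro rfl; simp at hU2
      have hz := zsf_merge hS hUS hU0
      have hSU : U + (S - U) = S := by rw [add_comm]; exact Multiset.sub_add_cancel hUS
      have hcard : card U + card (S - U) = n := by rw [← hn, ← Multiset.card_add, hSU]
      have ho' : ∀ g ∈ U.sum ::ₘ (S - U), addOrderOf g ∣ m := by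
        intro g hg
        rcases Multiset.mem_cons.1 hg with rfl | hg
        · exact (hUo.trans (Nat.div_dvd_of_dvd d.minFac_dvd)).trans hdm
        · exact hord g (Multiset.mem_of_le (Multiset.sub_le_self _ _) hg)
      have hk' : kstar m ≤ crossNum (U.sum ::ₘ (S - U)) := by
        rw [crossNum_cons]
        rw [← hSU, crossNum_add] at hk
        linarith
      have hpr := IH (card (S - U) + 1) (by omega) (U.sum ::ₘ (S - U)) (by simp) hz ho' hk'
      have hcn := (allprime_le hD hz hm ho' hpr).2 hk'
      have hex : ∃ y, y.Prime ∧ y ∣ m ∧ addOrderOf U.sum ≠ y := by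
        refine ⟨_, hx, d.minFac_dvd.trans hdm, fun h => ?_⟩
        rw [h] at hUo
        have hxx : d.minFac * d.minFac ∣ m :=
          (Nat.mul_dvd_of_dvd_div d.minFac_dvd hUo).trans hdm
        obtain ⟨k, hk2⟩ := hxx
        have hco := (hquot d.minFac (d.minFac * k) hx (by rw [hk2]; ring)).1
        exact hx.one_lt.ne' (Nat.eq_one_of_dvd_coprimes hco dvd_rfl (dvd_mul_right _ _))
      obtain ⟨y, hy, hym, hyU⟩ := hex
      apply hfull
      refine ⟨y, hy, hym, ?_⟩
      have h := hcn y (by simp [hy, hym, hm])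
      have h2 : cnt (U.sum ::ₘ (S - U)) y ≤ cnt S y := by
        unfold cnt
        rw [Multiset.countP_cons_of_neg (p := fun g => addOrderOf g = y) _ hyU]
        exact Multiset.countP_le_of_le _ (Multiset.sub_le_self _ _)
      omega
    · push Not at hfull hred
      have := hcount (cnt S) (cnt_one hS) (fun x hx hxm => hfull x hx hxm) hred
      rw [← crossNum_eq_sum m.divisors S (fun g hg => by simp [hord g hg, hm])] at this
      linarith
  intro S
  exact main _ S rfl

lemma claim1 {p : ℕ} (hp : p.Prime) : Claim G p := by
  intro S hS hord _ g hg
  rcases (Nat.dvd_prime hp).1 (hord g hg) with h | h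
  · exfalso
    rw [AddMonoid.addOrderOf_eq_one_iff] at h
    exact hS {g} (by simpa using hg) (by simp) (by simpa using h)
  · rw [h]; exact hp

lemma claim2 (hD : DavProp G) {p q : ℕ} (hp : p.Prime) (hq : q.Prime) (h1 : p < q) :
    Claim G (p * q) := by
  have cpq : p.Coprime q := (Nat.coprime_primes hp hq).2 h1.ne
  refine core hD (Nat.mul_ne_zero hp.ne_zero hq.ne_zero)
    (fun a => counting2 hp hq h1 a) ?_
  intro x e hx he
  have hxd : x ∣ p * q := ⟨e, he⟩
  rcases hx.dvd_mul.1 hxd with h | h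
  · obtain rfl := (Nat.prime_dvd_prime_iff_eq hx hp).1 h
    obtain rfl := Nat.eq_of_mul_eq_mul_left hx.pos he
    exact ⟨cpq, claim1 hq⟩
  · obtain rfl := (Nat.prime_dvd_prime_iff_eq hx hq).1 h
    obtain rfl := Nat.eq_of_mul_eq_mul_left hx.pos (by rw [← he]; ring : x * p = x * e)
    exact ⟨cpq.symm, claim1 hp⟩

lemma claim3 (hD : DavProp G) {p q r : ℕ} (hp : p.Prime) (hq : q.Prime) (hr : r.Prime)
    (h1 : p < q) (h2 : q < r) : Claim G (p * (q * r)) := by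
  have cpq : p.Coprime q := (Nat.coprime_primes hp hq).2 h1.ne
  have cpr : p.Coprime r := (Nat.coprime_primes hp hr).2 (h1.trans h2).ne
  have cqr : q.Coprime r := (Nat.coprime_primes hq hr).2 h2.ne
  refine core hD (Nat.mul_ne_zero hp.ne_zero (Nat.mul_ne_zero hq.ne_zero hr.ne_zero))
    (fun a => counting3 hp hq hr h1 h2 a) ?_
  intro x e hx he
  have hxd : x ∣ p * (q * r) := ⟨e, he⟩
  rcases hx.dvd_mul.1 hxd with h | h
  · obtain rfl := (Nat.prime_dvd_prime_iff_eq hx hp).1 h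
    obtain rfl := Nat.eq_of_mul_eq_mul_left hx.pos he
    exact ⟨cpq.mul_right cpr, claim2 hD hq hr h2⟩
  rcases hx.dvd_mul.1 h with h | h
  · obtain rfl := (Nat.prime_dvd_prime_iff_eq hx hq).1 h
    obtain rfl := Nat.eq_of_mul_eq_mul_left hx.pos (by rw [← he]; ring : x * (p * r) = x * e)
    exact ⟨cpq.symm.mul_right cqr, claim2 hD hp hr (h1.trans h2)⟩
  · obtain rfl := (Nat.prime_dvd_prime_iff_eq hx hr).1 h
    obtain rfl := Nat.eq_of_mul_eq_mul_left hx.pos (by rw [← he]; ring : x * (p * q) = x * e)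
    exact ⟨cpr.symm.mul_right cqr.symm, claim2 hD hp hq h1⟩

lemma claim3' (hD : DavProp G) {p q r : ℕ} (hp : p.Prime) (hq : q.Prime) (hr : r.Prime)
    (hpq : p ≠ q) (hpr : p ≠ r) (hqr : q ≠ r) : Claim G (p * (q * r)) := by
  rcases lt_or_gt_of_ne hpq with h1 | h1 <;> rcases lt_or_gt_of_ne hpr with h2 | h2 <;>
    rcases lt_or_gt_of_ne hqr with h3 | h3
  · exact claim3 hD hp hq hr h1 h3
  · rw [show p * (q * r) = p * (r * q) by ring]; exact claim3 hD hp hr hq h2 h3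
  · omega
  · rw [show p * (q * r) = r * (p * q) by ring]; exact claim3 hD hr hp hq h2 h1
  · rw [show p * (q * r) = q * (p * r) by ring]; exact claim3 hD hq hp hr h1 h2
  · omega
  · rw [show p * (q * r) = q * (r * p) by ring]; exact claim3 hD hq hr hp h3 h2
  · rw [show p * (q * r) = r * (q * p) by ring]; exact claim3 hD hr hq hp h3 h1

lemma cyc3 {p q r : ℕ} (h1 : p.Coprime q) (h2 : p.Coprime r) (h3 : q.Coprime r) :
    IsAddCyclic (ZMod p × ZMod q × ZMod r) :=
  isAddCyclic_of_surjective
    ((((ZMod.chineseRemainder (m := p) (n := q*r) (Nat.Coprime.mul_right h1 h2)).toAddEquiv).trans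
      ((AddEquiv.refl _).prodCongr (ZMod.chineseRemainder h3).toAddEquiv)))
    (AddEquiv.surjective _)

lemma zmod_nsmul_eq {p q : ℕ} (hp : p.Prime) (hq : q.Prime) (hpq : p ≠ q) {x : ZMod q}
    (h : p • x = 0) : x = 0 := by
  have := Fact.mk hq
  rw [nsmul_eq_mul, mul_eq_zero] at h
  rcases h with h | h
  · rw [ZMod.natCast_eq_zero_iff, Nat.prime_dvd_prime_iff_eq hq hp] at h
    exact absurd h.symm hpq
  · exact h

/-- The standard extremal sequence. -/
lemma std_zsf {p q r : ℕ} (hp : p.Prime) (hq : q.Prime) (hr : r.Prime) :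
    IsZeroSumFree (replicate (p-1) ((1, 0, 0) : ZMod p × ZMod q × ZMod r) +
      (replicate (q-1) (0, 1, 0) + replicate (r-1) (0, 0, 1))) := by
  classical
  intro T hT hT0 hs
  set a : ZMod p × ZMod q × ZMod r := (1, 0, 0)
  set b : ZMod p × ZMod q × ZMod r := (0, 1, 0)
  set c : ZMod p × ZMod q × ZMod r := (0, 0, 1)
  obtain ⟨A, X, hA, hX, rfl⟩ : ∃ A X, A ≤ replicate (p-1) a ∧
      X ≤ replicate (q-1) b + replicate (r-1) c ∧ A + X = T := by
    refine ⟨T ⊓ replicate (p-1) a, T - replicate (p-1) a, inf_le_right, ?_, ?_⟩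
    · rw [Multiset.sub_le_iff_le_add, add_comm]; exact hT
    · rw [add_comm]; exact Multiset.sub_add_inter _ _
  obtain ⟨B, C, hB, hC, rfl⟩ : ∃ B C, B ≤ replicate (q-1) b ∧
      C ≤ replicate (r-1) c ∧ B + C = X := by
    refine ⟨X ⊓ replicate (q-1) b, X - replicate (q-1) b, inf_le_right, ?_, ?_⟩
    · rw [Multiset.sub_le_iff_le_add, add_comm]; exact hX
    · rw [add_comm]; exact Multiset.sub_add_inter _ _
  obtain ⟨i, hi, rfl⟩ := Multiset.le_replicate_iff.1 hA
  obtain ⟨j, hj, rfl⟩ := Multiset.le_replicate_iff.1 hB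
  obtain ⟨k, hk, rfl⟩ := Multiset.le_replicate_iff.1 hC
  have z : ∀ {n i : ℕ}, n.Prime → i ≤ n - 1 → (i : ZMod n) = 0 → i = 0 := by
    intro n i hn hi h
    rw [ZMod.natCast_eq_zero_iff] at h
    refine Nat.eq_zero_of_dvd_of_lt h ?_
    have := hn.pos
    omega
  simp [a, b, c] at hs
  obtain ⟨h1, h2, h3⟩ := hs
  rw [z hp (by simpa using hi) h1, z hq (by simpa using hj) h2, z hr (by simpa using hk) h3] at hT0
  simp at hT0

/-- For distinct primes `p, q, r` and `G = C_p ⊕ C_q ⊕ C_r`: every zero-sum free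
sequence `S` over `G` with `k(S) = k(G)` splits as `S = Sp + Sq + Sr` where `Sp`, `Sq`,
`Sr` are zero-sum free sequences supported on the `p`-, `q`- and `r`-primary
components of `G` respectively. -/
theorem maximal_zero_sum_free_splits_three_primes
    (p q r : ℕ) (hp : p.Prime) (hq : q.Prime) (hr : r.Prime)
    (hpq : p ≠ q) (hpr : p ≠ r) (hqr : q ≠ r)
    (S : Multiset (ZMod p × ZMod q × ZMod r)) (hS : IsZeroSumFree S)
    (hmax : crossNum S = littleK (ZMod p × ZMod q × ZMod r)) :
    ∃ Sp Sq Sr : Multiset (ZMod p × ZMod q × ZMod r),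
      S = Sp + Sq + Sr ∧
        (∀ x ∈ Sp, x.2 = 0) ∧
        (∀ x ∈ Sq, x.1 = 0 ∧ x.2.2 = 0) ∧
        (∀ x ∈ Sr, x.1 = 0 ∧ x.2.1 = 0) ∧
        IsZeroSumFree Sp ∧ IsZeroSumFree Sq ∧ IsZeroSumFree Sr := by
  classical
  have cpq : p.Coprime q := (Nat.coprime_primes hp hq).2 hpq
  have cpr : p.Coprime r := (Nat.coprime_primes hp hr).2 hpr
  have cqr : q.Coprime r := (Nat.coprime_primes hq hr).2 hqr
  have := cyc3 cpq cpr cqr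
  have := Fact.mk hp
  have := Fact.mk hq
  have := Fact.mk hr
  have hD : DavProp (ZMod p × ZMod q × ZMod r) := davProp_of_cyclic
  have hcl := claim3' hD hp hq hr hpq hpr hqr
  have hm : p * (q * r) ≠ 0 := Nat.mul_ne_zero hp.ne_zero (Nat.mul_ne_zero hq.ne_zero hr.ne_zero)
  have hord : ∀ g : ZMod p × ZMod q × ZMod r, addOrderOf g ∣ p * (q * r) := by
    intro g
    rw [addOrderOf_dvd_iff_nsmul_eq_zero]
    ext <;> simp
  have ks : kstar (p * (q * r)) = (1 - (p:ℝ)⁻¹) + ((1 - (q:ℝ)⁻¹) + (1 - (r:ℝ)⁻¹)) := by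
    rw [kstar_mul hp (cpq.mul_right cpr), kstar_mul hq cqr]
    simp [kstar, hr.primeFactors]
  have hstd : crossNum (replicate (p-1) ((1, 0, 0) : ZMod p × ZMod q × ZMod r) +
      (replicate (q-1) (0, 1, 0) + replicate (r-1) (0, 0, 1))) = kstar (p * (q * r)) := by
    have o : ∀ (n : ℕ) (hn : n.Prime) (g : ZMod p × ZMod q × ZMod r), n • g = 0 → g ≠ 0 →
        crossNum (replicate (n-1) g) = 1 - (n:ℝ)⁻¹ := by
      intro n hn g h h0
      have := Fact.mk hn
      rw [crossNum_const _ n (fun x hx => by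
        rw [Multiset.eq_of_mem_replicate hx]; exact addOrderOf_eq_prime h h0)]
      have : (n:ℝ) ≠ 0 := by exact_mod_cast hn.ne_zero
      rw [Multiset.card_replicate, Nat.cast_sub hn.one_lt.le]
      field_simp
      simp
    rw [crossNum_add, crossNum_add, ks, o p hp _ (by ext <;> simp) (by simp),
      o q hq _ (by ext <;> simp) (by simp), o r hr _ (by ext <;> simp) (by simp)]
  have hk : kstar (p * (q * r)) ≤ crossNum S := by
    rw [hmax]
    apply le_csSup
    · refine ⟨kstar (p * (q * r)), ?_⟩
      rintro _ ⟨T, hT, rfl⟩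
      by_contra hlt
      push Not at hlt
      have := (allprime_le hD hT hm (fun g _ => hord g) (hcl T hT (fun g _ => hord g) hlt.le)).1
      linarith
    · exact ⟨_, std_zsf hp hq hr, hstd⟩
  have hpr' := hcl S hS (fun g _ => hord g) hk
  have hcase : ∀ g ∈ S, addOrderOf g = p ∨ addOrderOf g = q ∨ addOrderOf g = r := by
    intro g hg
    have hx := hpr' g hg
    rcases hx.dvd_mul.1 (hord g) with h | h
    · exact Or.inl ((Nat.prime_dvd_prime_iff_eq hx hp).1 h)
    rcases hx.dvd_mul.1 h with h | h
    · exact Or.inr (Or.inl ((Nat.prime_dvd_prime_iff_eq hx hq).1 h))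
    · exact Or.inr (Or.inr ((Nat.prime_dvd_prime_iff_eq hx hr).1 h))
  refine ⟨S.filter (fun g => addOrderOf g = p), S.filter (fun g => addOrderOf g = q),
    S.filter (fun g => addOrderOf g = r), ?_, ?_, ?_, ?_, zsf_mono hS (Multiset.filter_le _ _),
    zsf_mono hS (Multiset.filter_le _ _), zsf_mono hS (Multiset.filter_le _ _)⟩
  · ext g
    simp only [Multiset.count_add, Multiset.count_filter]
    by_cases hg : g ∈ S
    · rcases hcase g hg with h | h | h <;> simp [h, hpq, hpr, hqr, hpq.symm, hpr.symm, hqr.symm]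
    · simp [Multiset.count_eq_zero_of_notMem hg]
  · intro x hx
    have h := addOrderOf_dvd_iff_nsmul_eq_zero.1 (Multiset.mem_filter.1 hx).2.dvd
    simp only [Prod.ext_iff] at h ⊢
    exact ⟨zmod_nsmul_eq hp hq hpq h.2.1, zmod_nsmul_eq hp hr hpr h.2.2⟩
  · intro x hx
    have h := addOrderOf_dvd_iff_nsmul_eq_zero.1 (Multiset.mem_filter.1 hx).2.dvd
    simp only [Prod.ext_iff] at h
    exact ⟨zmod_nsmul_eq hq hp hpq.symm h.1, zmod_nsmul_eq hq hr hqr h.2.2⟩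
  · intro x hx
    have h := addOrderOf_dvd_iff_nsmul_eq_zero.1 (Multiset.mem_filter.1 hx).2.dvd
    simp only [Prod.ext_iff] at h
    exact ⟨zmod_nsmul_eq hr hp hpr.symm h.1, zmod_nsmul_eq hr hq hqr.symm h.2.1⟩
end

section
/- Let p, q, r be distinct primes and G = C_p ⊕ C_q ⊕ C_r. If U is a minimal zero-sum sequence over G with k(U) = K(G), then U = g · U_p · U_q · U_r where g is a single element of order pqr = exp(G) and U_p, U_q, U_r are zero-sum free sequences over the p-primary, q-primary, and r-primary components of G respectively. -/
/-- `S` is a minimal zero-sum sequence: nonempty, sum zero, and no nonempty proper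
sub-multiset has sum `0`. -/
def IsMinZeroSum {G : Type*} [AddCommGroup G] (S : Multiset G) : Prop :=
  S ≠ 0 ∧ S.sum = 0 ∧ ∀ T : Multiset G, T ≤ S → T ≠ 0 → T ≠ S → T.sum ≠ 0

/-- The cross number `K(G)`: the maximal cross number of a minimal zero-sum
sequence over `G`. -/
noncomputable def bigK (G : Type*) [AddCommGroup G] : ℝ :=
  sSup {x : ℝ | ∃ S : Multiset G, IsMinZeroSum S ∧ crossNum S = x}


namespace CrossAux

lemma minZS_iff {G : Type*} [AddCommGroup G] (U : Multiset G) :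
    IsMinZeroSum U ↔ U ≠ 0 ∧ U.sum = 0 ∧
      ∀ X Y : Multiset G, U = X + Y → X.sum = 0 → X = 0 ∨ Y = 0 := by
  unfold IsMinZeroSum
  refine and_congr_right fun _ => and_congr_right fun _ => ⟨?_, ?_⟩
  · intro h X Y hXY hX
    by_contra! hc
    refine h X (by rw [hXY]; exact Multiset.le_add_right _ _) hc.1 ?_ hX
    intro he
    rw [← he] at hXY
    exact hc.2 (by simpa using hXY)
  · intro h T hT hT0 hTU hs
    obtain ⟨Y, hY⟩ := Multiset.le_iff_exists_add.1 hT
    rcases h T Y hY hs with h | h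
    · exact hT0 h
    · exact hTU (by simp [hY, h])

/-- Pigeonhole on partial sums. -/
lemma exists_zero_sub {G : Type*} [AddCommGroup G] {p : ℕ} (hp : p.Prime) (f : G →+ ZMod p)
    (S : Multiset G) (hS : p ≤ Multiset.card S) :
    ∃ T ≤ S, T ≠ 0 ∧ Multiset.card T ≤ p ∧ f T.sum = 0 := by
  have : Fact p.Prime := ⟨hp⟩
  obtain ⟨l, rfl⟩ := Quot.exists_rep S
  change p ≤ l.length at hS
  obtain ⟨i, j, hij, he⟩ := Fintype.exists_ne_map_eq_of_card_lt
    (fun i : Fin (p + 1) => f (l.take i).sum) (by simp [ZMod.card])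
  wlog hlt : i < j generalizing i j
  · exact this j i hij.symm he.symm (lt_of_le_of_ne (not_lt.1 hlt) hij.symm)
  have hlt' : (i : ℕ) < j := hlt
  have hj : (j : ℕ) < p + 1 := j.2
  refine ⟨((l.take j).drop i : List G), ?_, ?_, ?_, ?_⟩
  · exact Multiset.coe_le.2 ((List.drop_sublist _ _).trans (List.take_sublist _ _)).subperm
  · intro h
    have := congrArg Multiset.card h
    simp at this
    omega
  · simp
    omega
  · have h1 : (l.take j).sum = (l.take i).sum + ((l.take j).drop i).sum := by
      rw [← List.sum_append]
      congr 1
      conv_lhs => rw [← List.take_append_drop i (l.take j)]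
      rw [List.take_take, min_eq_left hlt'.le]
    simp only [h1, map_add] at he
    simpa using he

open scoped Pointwise in
lemma subset_sums {G : Type*} [AddCommGroup G] {p : ℕ} (hp : p.Prime) (f : G →+ ZMod p)
    (A : Multiset G) (hA : ∀ x ∈ A, f x ≠ 0) :
    ∃ F : Finset (ZMod p), min p (Multiset.card A + 1) ≤ F.card ∧
      ∀ y ∈ F, ∃ X Y, A = X + Y ∧ f X.sum = y := by
  induction A using Multiset.induction_on with
  | empty =>
    refine ⟨{0}, by simp, fun y hy => ⟨0, 0, by simp, ?_⟩⟩
    simp only [Finset.mem_singleton] at hy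
    simp [hy]
  | cons a A ih =>
    obtain ⟨F, hF, hF'⟩ := ih (fun x hx => hA x (Multiset.mem_cons_of_mem hx))
    have ha := hA a (Multiset.mem_cons_self a A)
    have hpp := hp.pos
    have hne : F.Nonempty := by
      rw [← Finset.card_pos]
      exact lt_of_lt_of_le (by simp [hpp]) hF
    refine ⟨F + {0, f a}, ?_, ?_⟩
    · have := ZMod.cauchy_davenport hp hne (t := {0, f a}) (by simp)
      rw [Finset.card_pair (Ne.symm ha)] at this
      refine le_trans ?_ this
      simp only [Multiset.card_cons]
      omega
    · intro y hy
      obtain ⟨u, hu, v, hv, rfl⟩ := Finset.mem_add.1 hy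
      obtain ⟨X, Y, hXY, hX⟩ := hF' u hu
      simp only [Finset.mem_insert, Finset.mem_singleton] at hv
      rcases hv with rfl | rfl
      · exact ⟨X, a ::ₘ Y, by simp [hXY], by simp [hX]⟩
      · exact ⟨a ::ₘ X, Y, by simp [hXY], by simp [hX, add_comm]⟩

lemma subset_sums_all {G : Type*} [AddCommGroup G] {p : ℕ} (hp : p.Prime) (f : G →+ ZMod p)
    (A : Multiset G) (hA : ∀ x ∈ A, f x ≠ 0) (hc : p ≤ Multiset.card A + 1) (y : ZMod p) :
    ∃ X Y, A = X + Y ∧ f X.sum = y := by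
  have : Fact p.Prime := ⟨hp⟩
  obtain ⟨F, hF, hF'⟩ := subset_sums hp f A hA
  apply hF'
  have : F = Finset.univ := by
    rw [← Finset.card_eq_iff_eq_univ, ZMod.card]
    apply le_antisymm
    · exact (Finset.card_le_univ F).trans (by simp [ZMod.card])
    · rwa [min_eq_left hc] at hF
  simp [this]

lemma split_map {G H : Type*} (h : G → H) (R : Multiset G) :
    ∀ X Y : Multiset H, R.map h = X + Y → ∃ X' Y', R = X' + Y' ∧ X'.map h = X ∧ Y'.map h = Y := by
  classical
  induction R using Multiset.induction_on with
  | empty =>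
    intro X Y hXY
    have : X = 0 ∧ Y = 0 := by simpa using hXY.symm
    exact ⟨0, 0, by simp, by simp [this.1], by simp [this.2]⟩
  | cons a R ih =>
    intro X Y hXY
    rw [Multiset.map_cons] at hXY
    have hm : h a ∈ X + Y := by rw [← hXY]; exact Multiset.mem_cons_self _ _
    rcases Multiset.mem_add.1 hm with hm | hm
    · obtain ⟨X1, rfl⟩ := Multiset.exists_cons_of_mem hm
      rw [Multiset.cons_add, Multiset.cons_inj_right] at hXY
      obtain ⟨X', Y', h1, h2, h3⟩ := ih _ _ hXY
      exact ⟨a ::ₘ X', Y', by simp [h1], by simp [h2], h3⟩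
    · obtain ⟨Y1, rfl⟩ := Multiset.exists_cons_of_mem hm
      rw [Multiset.add_cons, Multiset.cons_inj_right] at hXY
      obtain ⟨X', Y', h1, h2, h3⟩ := ih _ _ hXY
      exact ⟨X', a ::ₘ Y', by simp [h1], h2, by simp [h3]⟩

lemma map_hom_sum {G H : Type*} [AddCommGroup G] [AddCommGroup H] (h : G →+ H)
    (R : Multiset G) : (R.map h).sum = h R.sum := (map_multiset_sum h R).symm

lemma hom_sum_zero {G H : Type*} [AddCommGroup G] [AddCommGroup H] (h : G →+ H)
    (R : Multiset G) (hR : ∀ x ∈ R, h x = 0) : h R.sum = 0 := by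
  rw [← map_hom_sum]
  apply Multiset.sum_eq_zero
  intro y hy
  obtain ⟨x, hx, rfl⟩ := Multiset.mem_map.1 hy
  exact hR x hx

/-- Projection: cancelling the `p`-component with a full set of order-`p` elements. -/
lemma proj {G H : Type*} [AddCommGroup G] [AddCommGroup H] {p : ℕ} (hp : p.Prime)
    (f : G →+ ZMod p) (h : G →+ H) (hinj : ∀ x, f x = 0 → h x = 0 → x = 0)
    (A R : Multiset G) (hU : IsMinZeroSum (A + R)) (hA : ∀ x ∈ A, f x ≠ 0 ∧ h x = 0)
    (hc : p ≤ Multiset.card A + 1) (hR : R ≠ 0) : IsMinZeroSum (R.map h) := by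
  rw [minZS_iff] at hU ⊢
  obtain ⟨-, hs, hmin⟩ := hU
  have hA0 : h A.sum = 0 := hom_sum_zero h A fun x hx => (hA x hx).2
  refine ⟨by simpa using hR, ?_, ?_⟩
  · rw [map_hom_sum]
    have := congrArg h hs
    simpa [hA0] using this
  · intro X Y hXY hX
    obtain ⟨X', Y', rfl, rfl, rfl⟩ := split_map h R X Y hXY
    obtain ⟨A1, A2, rfl, hA1⟩ := subset_sums_all hp f A (fun x hx => (hA x hx).1) hc (-f X'.sum)
    have hz : (A1 + X').sum = 0 := by
      apply hinj
      · simp [hA1]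
      · have : h A1.sum = 0 := hom_sum_zero h A1 fun x hx => (hA x (by simp [hx])).2
        rw [map_hom_sum] at hX
        simp [this, hX]
    rcases hmin (A1 + X') (A2 + Y') (by abel) hz with h0 | h0
    · left
      have : X' = 0 := by simpa using (show A1 = 0 ∧ X' = 0 by simpa using h0).2
      simp [this]
    · right
      have : Y' = 0 := by simpa using (show A2 = 0 ∧ Y' = 0 by simpa using h0).2
      simp [this]

lemma merge {G : Type*} [AddCommGroup G] (T R : Multiset G) (hT : T ≠ 0)
    (hU : IsMinZeroSum (T + R)) : IsMinZeroSum (T.sum ::ₘ R) := by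
  rw [minZS_iff] at hU ⊢
  obtain ⟨-, hs, hmin⟩ := hU
  refine ⟨by simp, by simpa using hs, ?_⟩
  intro X Y hXY hX
  have hm : T.sum ∈ X + Y := by rw [← hXY]; exact Multiset.mem_cons_self _ _
  rcases Multiset.mem_add.1 hm with hm | hm
  · obtain ⟨X1, rfl⟩ := Multiset.exists_cons_of_mem hm
    rw [Multiset.cons_add, Multiset.cons_inj_right] at hXY
    rcases hmin (T + X1) Y (by rw [hXY]; abel) (by simpa using hX) with h0 | h0
    · exact absurd (show T = 0 ∧ X1 = 0 by simpa using h0).1 hT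
    · exact Or.inr h0
  · obtain ⟨Y1, rfl⟩ := Multiset.exists_cons_of_mem hm
    rw [Multiset.add_cons, Multiset.cons_inj_right] at hXY
    rcases hmin X (T + Y1) (by rw [hXY]; abel) hX with h0 | h0
    · exact Or.inl h0
    · exact absurd (show T = 0 ∧ Y1 = 0 by simpa using h0).1 hT

lemma minZS_zero_mem {G : Type*} [AddCommGroup G] (U : Multiset G) (hU : IsMinZeroSum U)
    (h0 : (0 : G) ∈ U) : U = {0} := by
  rw [minZS_iff] at hU
  obtain ⟨Y, rfl⟩ := Multiset.exists_cons_of_mem h0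
  rcases hU.2.2 {0} Y (by simp) (by simp) with h | h
  · simp at h
  · simp [h]

lemma ord_bound {G H : Type*} [AddCommGroup G] [AddCommGroup H] {p : ℕ} (hp : p.Prime)
    (f : G →+ ZMod p) (h : G →+ H) (hinj : ∀ x, f x = 0 → h x = 0 → x = 0)
    (U : Multiset G) (hU : IsMinZeroSum U) (P : G → Prop) [DecidablePred P]
    (hP : ∀ x, P x → h x = 0) (hc : p ≤ U.countP P) :
    Multiset.card U ≤ p ∧ U.countP P = Multiset.card U := by
  rw [Multiset.countP_eq_card_filter] at hc
  obtain ⟨T, hT, hT0, hTc, hTs⟩ := exists_zero_sub hp f _ hc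
  have hz : T.sum = 0 := hinj _ hTs
    (hom_sum_zero h T fun x hx => hP x (Multiset.mem_filter.1 (Multiset.mem_of_le hT hx)).2)
  have hTU : T = U := by
    by_contra hne
    exact hU.2.2 T (hT.trans (Multiset.filter_le _ _)) hT0 hne hz
  subst hTU
  refine ⟨hTc, ?_⟩
  rw [Multiset.countP_eq_card]
  exact fun x hx => (Multiset.mem_filter.1 (Multiset.mem_of_le hT hx)).2

lemma card_le_of_minZS {r : ℕ} (hr : r.Prime) (V : Multiset (ZMod r)) (hV : IsMinZeroSum V) :
    Multiset.card V ≤ r := by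
  by_contra! hc
  have := ord_bound hr (AddMonoidHom.id (ZMod r)) (0 : ZMod r →+ ZMod r) (fun x hx _ => hx) V hV
    (fun _ => True) (fun _ _ => rfl) (by simpa using hc.le)
  omega

lemma exists_nonzero {G H : Type*} [AddCommGroup G] [AddCommGroup H] {p : ℕ}
    (f : G →+ ZMod p) (h : G →+ H) (hinj : ∀ x, f x = 0 → h x = 0 → x = 0)
    (A R : Multiset G) (hU : IsMinZeroSum (A + R)) (hA : ∀ x ∈ A, h x = 0)
    (hA0 : A ≠ 0) (hR : R ≠ 0) : ∃ x ∈ R, f x ≠ 0 := by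
  by_contra! hc
  rw [minZS_iff] at hU
  have h1 : f R.sum = 0 := hom_sum_zero f R hc
  have h2 : f A.sum = 0 := by
    have := congrArg f hU.2.1
    simpa [h1] using this
  have h3 : h A.sum = 0 := hom_sum_zero h A hA
  rcases hU.2.2 A R rfl (hinj _ h2 h3) with h | h
  · exact hA0 h
  · exact hR h

lemma exists_merge {G : Type*} [AddCommGroup G] {p : ℕ} (hp : p.Prime)
    (f : G →+ ZMod p) (U : Multiset G) (P : G → Prop) [DecidablePred P]
    (hP : ∀ x, P x → f x ≠ 0) (hc : p ≤ U.countP P) :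
    ∃ T R, U = T + R ∧ T ≠ 0 ∧ Multiset.card T ≤ p ∧ 2 ≤ Multiset.card T ∧ f T.sum = 0 ∧
      ∀ x ∈ T, P x := by
  rw [Multiset.countP_eq_card_filter] at hc
  obtain ⟨T, hT, hT0, hTc, hTs⟩ := exists_zero_sub hp f _ hc
  obtain ⟨R, hR⟩ := Multiset.le_iff_exists_add.1 (hT.trans (Multiset.filter_le _ _))
  have hTP : ∀ x ∈ T, P x := fun x hx => (Multiset.mem_filter.1 (Multiset.mem_of_le hT hx)).2
  refine ⟨T, R, hR, hT0, hTc, ?_, hTs, hTP⟩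
  by_contra! hlt
  have h1 : Multiset.card T = 1 := by
    have := Multiset.card_pos.2 hT0
    omega
  obtain ⟨x, rfl⟩ := Multiset.card_eq_one.1 h1
  exact hP x (hTP x (by simp)) (by simpa using hTs)

/-- Local weight. -/
def wt {G : Type*} [AddCommGroup G] (p : ℕ) (f : G →+ ZMod p) (x : G) : ℕ :=
  if f x = 0 then p else 1

lemma wt_pos {G : Type*} [AddCommGroup G] {p : ℕ} (hp : p.Prime) (f : G →+ ZMod p) (x : G) :
    1 ≤ wt p f x := by
  unfold wt; split_ifs
  · exact hp.pos
  · exact le_rfl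

section two

variable {G : Type*} [AddCommGroup G] {q r : ℕ}

def W2 (b : G →+ ZMod q) (c : G →+ ZMod r) (U : Multiset G) : ℕ :=
  (U.map fun x => wt q b x * wt r c x).sum

def c10 (b : G →+ ZMod q) (c : G →+ ZMod r) (U : Multiset G) : ℕ :=
  U.countP fun x => b x ≠ 0 ∧ c x = 0

def c11 (b : G →+ ZMod q) (c : G →+ ZMod r) (U : Multiset G) : ℕ :=
  U.countP fun x => b x ≠ 0 ∧ c x ≠ 0

def c00 (b : G →+ ZMod q) (c : G →+ ZMod r) (U : Multiset G) : ℕ :=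
  U.countP fun x => b x = 0 ∧ c x = 0

lemma W2_eq (b : G →+ ZMod q) (c : G →+ ZMod r) (U : Multiset G) :
    W2 b c U = r * c10 b c U + q * c10 c b U + c11 b c U + q * r * c00 b c U := by
  induction U using Multiset.induction_on with
  | empty => simp [W2, c10, c11, c00]
  | cons x U ih =>
    simp only [W2, c10, c11, c00, Multiset.map_cons, Multiset.sum_cons, Multiset.countP_cons] at ih ⊢
    rw [ih]
    by_cases hb : b x = 0 <;> by_cases hc : c x = 0 <;> simp [wt, hb, hc] <;> ring

lemma card_eq2 (b : G →+ ZMod q) (c : G →+ ZMod r) (U : Multiset G) :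
    Multiset.card U = c10 b c U + c10 c b U + c11 b c U + c00 b c U := by
  induction U using Multiset.induction_on with
  | empty => simp [c10, c11, c00]
  | cons x U ih =>
    simp only [c10, c11, c00, Multiset.card_cons, Multiset.countP_cons] at ih ⊢
    rw [ih]
    by_cases hb : b x = 0 <;> by_cases hc : c x = 0 <;> simp [hb, hc] <;> ring

lemma W2_symm (b : G →+ ZMod q) (c : G →+ ZMod r) (U : Multiset G) : W2 b c U = W2 c b U := by
  unfold W2; simp only [mul_comm]

lemma c11_symm (b : G →+ ZMod q) (c : G →+ ZMod r) (U : Multiset G) : c11 b c U = c11 c b U := by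
  unfold c11; simp only [and_comm]

lemma c00_eq_zero (hq : q.Prime) (hr : r.Prime) (b : G →+ ZMod q) (c : G →+ ZMod r)
    (hinj : ∀ x, b x = 0 → c x = 0 → x = 0) (U : Multiset G) (hU : IsMinZeroSum U)
    (hW : 2 * q * r + 1 ≤ W2 b c U + q + r) : c00 b c U = 0 := by
  by_contra h
  obtain ⟨x, hx, hx1, hx2⟩ := Multiset.countP_pos.1 (Nat.pos_of_ne_zero h)
  have := hinj x hx1 hx2
  subst this
  have := minZS_zero_mem U hU hx
  subst this
  simp [W2, wt] at hW
  nlinarith [hq.two_le, hr.two_le]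

lemma c10_lt (hq : q.Prime) (hr : r.Prime) (b : G →+ ZMod q) (c : G →+ ZMod r)
    (hinj : ∀ x, b x = 0 → c x = 0 → x = 0) (U : Multiset G) (hU : IsMinZeroSum U)
    (hW : 2 * q * r + 1 ≤ W2 b c U + q + r) : c10 b c U + 1 ≤ q := by
  by_contra! h
  obtain ⟨h1, h2⟩ := ord_bound hq b c hinj U hU (fun x => b x ≠ 0 ∧ c x = 0) (fun x hx => hx.2)
    (by unfold c10 at h; omega)
  have h3 := card_eq2 b c U
  have h4 := W2_eq b c U
  change c10 b c U = _ at h2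
  have h5 : c10 c b U = 0 := by omega
  have h6 : c11 b c U = 0 := by omega
  have h7 : c00 b c U = 0 := by omega
  rw [h5, h6, h7] at h4
  have h8 : c10 b c U ≤ q := by omega
  nlinarith [hq.two_le, hr.two_le, Nat.mul_le_mul_left r h8]

lemma two_full (hq : q.Prime) (hr : r.Prime) (b : G →+ ZMod q) (c : G →+ ZMod r)
    (hinj : ∀ x, b x = 0 → c x = 0 → x = 0) (U : Multiset G) (hU : IsMinZeroSum U)
    (hW : 2 * q * r + 1 ≤ W2 b c U + q + r) (hf : q ≤ c10 b c U + 1) :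
    c10 b c U + 1 = q ∧ c10 c b U + 1 = r ∧ c11 b c U = 1 := by
  have hlt := c10_lt hq hr b c hinj U hU hW
  have h0 := c00_eq_zero hq hr b c hinj U hU hW
  have h4 := W2_eq b c U
  have h3 := card_eq2 b c U
  have hq2 := hq.two_le
  have hr2 := hr.two_le
  set A := U.filter (fun x => b x ≠ 0 ∧ c x = 0) with hA
  set R := U.filter (fun x => ¬ (b x ≠ 0 ∧ c x = 0)) with hR
  have hAR : A + R = U := Multiset.filter_add_not _ _
  have hAc : Multiset.card A = c10 b c U := by
    rw [hA, ← Multiset.countP_eq_card_filter]; rfl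
  have hcard : Multiset.card A + Multiset.card R = Multiset.card U := by
    rw [← hAR, Multiset.card_add]
  have hAmem : ∀ x ∈ A, b x ≠ 0 ∧ c x = 0 := fun x hx => (Multiset.mem_filter.1 hx).2
  have hA0 : A ≠ 0 := by
    intro h; rw [h] at hAc; simp at hAc; omega
  have hR0 : R ≠ 0 := by
    intro h; rw [h] at hcard; simp at hcard
    have h5 : c10 c b U = 0 := by omega
    have h6 : c11 b c U = 0 := by omega
    rw [h5, h6, h0] at h4
    nlinarith [Nat.mul_le_mul_left r hlt]
  rw [← hAR] at hU
  have hV := card_le_of_minZS hr _ (proj hq b c hinj A R hU hAmem (by omega) hR0)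
  rw [Multiset.card_map] at hV
  obtain ⟨x, hx, hx'⟩ := exists_nonzero b c hinj A R hU (fun x hx => (hAmem x hx).2) hA0 hR0
  have h11 : 1 ≤ c11 b c U := by
    rw [hR, Multiset.mem_filter] at hx
    exact Multiset.countP_pos.2 ⟨x, hx.1, hx', fun h => hx.2 ⟨hx', h⟩⟩
  have hsum : c10 c b U + c11 b c U ≤ r := by omega
  generalize c10 b c U = n at *
  generalize c10 c b U = m at *
  generalize c11 b c U = k at *
  rw [h4, h0] at hW
  have hn : n + 1 = q := by omega
  subst hn
  obtain ⟨k, rfl⟩ := Nat.exists_eq_add_of_le h11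
  obtain ⟨n, rfl⟩ := Nat.exists_eq_add_of_le (show 1 ≤ n by omega)
  obtain ⟨d, hd⟩ := Nat.exists_eq_add_of_le hsum
  subst hd
  have hk : k = 0 ∧ d = 0 := by
    constructor
    · by_contra hk
      have : 1 ≤ k := by omega
      nlinarith [Nat.zero_le (n * k), Nat.zero_le (n * d)]
    · by_contra hk
      have : 1 ≤ d := by omega
      nlinarith [Nat.zero_le (n * k), Nat.zero_le (n * d), Nat.mul_le_mul_left n this]
  refine ⟨rfl, ?_, ?_⟩ <;> omega

lemma two (hq : q.Prime) (hr : r.Prime) (b : G →+ ZMod q) (c : G →+ ZMod r)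
    (hinj : ∀ x, b x = 0 → c x = 0 → x = 0) : ∀ (n : ℕ) (U : Multiset G), Multiset.card U = n →
    IsMinZeroSum U → 2 * q * r + 1 ≤ W2 b c U + q + r →
    c10 b c U + 1 = q ∧ c10 c b U + 1 = r ∧ c11 b c U = 1 := by
  intro n
  induction n using Nat.strong_induction_on with
  | _ n ih =>
  intro U hn hU hW
  by_cases h1 : q ≤ c10 b c U + 1
  · exact two_full hq hr b c hinj U hU hW h1
  by_cases h2 : r ≤ c10 c b U + 1
  · obtain ⟨e1, e2, e3⟩ := two_full hr hq c b (fun x hx hy => hinj x hy hx) U hU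
      (by rw [← W2_symm]; linarith) h2
    exact ⟨e2, e1, by rw [c11_symm]; exact e3⟩
  exfalso
  have h0 := c00_eq_zero hq hr b c hinj U hU hW
  have h4 := W2_eq b c U
  have hc : q ≤ U.countP fun x => b x ≠ 0 ∧ c x ≠ 0 := by
    change q ≤ c11 b c U
    rw [h0, mul_zero, add_zero] at h4
    rw [not_le] at h1 h2
    nlinarith [hq.two_le, hr.two_le, Nat.mul_le_mul_left r (show c10 b c U + 2 ≤ q by omega),
      Nat.mul_le_mul_left q (show c10 c b U + 2 ≤ r by omega)]
  obtain ⟨T, R, rfl, hT0, hTp, hT2, hTs, hTP⟩ := exists_merge hq b U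
    (fun x => b x ≠ 0 ∧ c x ≠ 0) (fun x hx => hx.1) hc
  have hm := merge T R hT0 hU
  have hWT : W2 b c T ≤ q := by
    have : W2 b c T = Multiset.card T := by
      unfold W2
      rw [Multiset.map_congr rfl (g := fun _ => 1)
        (fun x hx => by simp [wt, (hTP x hx).1, (hTP x hx).2])]
      simp
    omega
  have hWU : W2 b c (T + R) = W2 b c T + W2 b c R := by simp [W2]
  have hWU' : W2 b c (T.sum ::ₘ R) = wt q b T.sum * wt r c T.sum + W2 b c R := by simp [W2]
  have hws : q ≤ wt q b T.sum * wt r c T.sum := by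
    have : wt q b T.sum = q := by simp [wt, hTs]
    rw [this]
    exact Nat.le_mul_of_pos_right _ (wt_pos hr c _)
  have := ih (Multiset.card (T.sum ::ₘ R)) (by rw [← hn]; simp; omega) _ rfl hm (by omega)
  have hle : c10 b c (T.sum ::ₘ R) ≤ c10 b c (T + R) := by
    simp [c10, hTs]
  omega

end two

section three

variable {G : Type*} [AddCommGroup G] {p q r : ℕ}

def W3 (a : G →+ ZMod p) (b : G →+ ZMod q) (c : G →+ ZMod r) (U : Multiset G) : ℕ :=
  (U.map fun x => wt p a x * wt q b x * wt r c x).sum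

def n1 (a : G →+ ZMod p) (b : G →+ ZMod q) (c : G →+ ZMod r) (U : Multiset G) : ℕ :=
  U.countP fun x => a x ≠ 0 ∧ b x = 0 ∧ c x = 0

def n2 (a : G →+ ZMod p) (b : G →+ ZMod q) (c : G →+ ZMod r) (U : Multiset G) : ℕ :=
  U.countP fun x => a x ≠ 0 ∧ b x ≠ 0 ∧ c x = 0

def n3 (a : G →+ ZMod p) (b : G →+ ZMod q) (c : G →+ ZMod r) (U : Multiset G) : ℕ :=
  U.countP fun x => a x ≠ 0 ∧ b x ≠ 0 ∧ c x ≠ 0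

def n0 (a : G →+ ZMod p) (b : G →+ ZMod q) (c : G →+ ZMod r) (U : Multiset G) : ℕ :=
  U.countP fun x => a x = 0 ∧ b x = 0 ∧ c x = 0

variable (a : G →+ ZMod p) (b : G →+ ZMod q) (c : G →+ ZMod r) (U : Multiset G)

lemma W3_eq : W3 a b c U = q * r * n1 a b c U + p * r * n1 b a c U + p * q * n1 c a b U
    + r * n2 a b c U + q * n2 a c b U + p * n2 b c a U + n3 a b c U
    + p * q * r * n0 a b c U := by
  induction U using Multiset.induction_on with
  | empty => simp [W3, n0, n1, n2, n3]
  | cons x U ih =>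
    simp only [W3, n0, n1, n2, n3, Multiset.map_cons, Multiset.sum_cons,
      Multiset.countP_cons] at ih ⊢
    rw [ih]
    by_cases ha : a x = 0 <;> by_cases hb : b x = 0 <;> by_cases hc : c x = 0 <;>
      simp [wt, ha, hb, hc] <;> ring

lemma card_eq3 : Multiset.card U = n1 a b c U + n1 b a c U + n1 c a b U
    + n2 a b c U + n2 a c b U + n2 b c a U + n3 a b c U + n0 a b c U := by
  induction U using Multiset.induction_on with
  | empty => simp [n0, n1, n2, n3]
  | cons x U ih =>
    simp only [n0, n1, n2, n3, Multiset.card_cons, Multiset.countP_cons] at ih ⊢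
    rw [ih]
    by_cases ha : a x = 0 <;> by_cases hb : b x = 0 <;> by_cases hc : c x = 0 <;>
      simp [ha, hb, hc] <;> ring

lemma n1_symm : n1 a b c U = n1 a c b U := by
  unfold n1
  exact Multiset.countP_congr rfl fun x _ => propext (by tauto)

lemma n2_symm : n2 a b c U = n2 b a c U := by
  unfold n2
  exact Multiset.countP_congr rfl fun x _ => propext (by tauto)

lemma n3_symm1 : n3 a b c U = n3 b a c U := by
  unfold n3
  exact Multiset.countP_congr rfl fun x _ => propext (by tauto)

lemma n3_symm2 : n3 a b c U = n3 a c b U := by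
  unfold n3
  exact Multiset.countP_congr rfl fun x _ => propext (by tauto)

lemma W3_symm1 : W3 a b c U = W3 b a c U := by
  unfold W3
  exact congrArg _ (Multiset.map_congr rfl fun x _ => by ring)

lemma W3_symm2 : W3 a b c U = W3 a c b U := by
  unfold W3
  exact congrArg _ (Multiset.map_congr rfl fun x _ => by ring)

/-- The hypotheses. -/
def Big : Prop := IsMinZeroSum U ∧ (∀ x, a x = 0 → b x = 0 → c x = 0 → x = 0) ∧
  3 * (p * q * r) + 1 ≤ W3 a b c U + q * r + p * r + p * q

/-- The conclusion. -/
def Good : Prop := n1 a b c U + 1 = p ∧ n1 b a c U + 1 = q ∧ n1 c a b U + 1 = r ∧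
  n2 a b c U = 0 ∧ n2 a c b U = 0 ∧ n2 b c a U = 0 ∧ n3 a b c U = 1

variable {a b c U}

lemma Big.symm1 (h : Big a b c U) : Big b a c U :=
  ⟨h.1, fun x h1 h2 h3 => h.2.1 x h2 h1 h3, by rw [W3_symm1]; linarith [h.2.2]⟩

lemma Big.symm2 (h : Big a b c U) : Big a c b U :=
  ⟨h.1, fun x h1 h2 h3 => h.2.1 x h1 h3 h2, by rw [W3_symm2]; linarith [h.2.2]⟩

lemma Good.symm1 (h : Good a b c U) : Good b a c U := by
  obtain ⟨h1, h2, h3, h4, h5, h6, h7⟩ := h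
  exact ⟨h2, h1, by rw [n1_symm]; exact h3, by rw [n2_symm]; exact h4, h6, h5,
    by rw [n3_symm1]; exact h7⟩

lemma Good.symm2 (h : Good a b c U) : Good a c b U := by
  obtain ⟨h1, h2, h3, h4, h5, h6, h7⟩ := h
  exact ⟨by rw [n1_symm]; exact h1, h3, h2, h5, h4, by rw [n2_symm]; exact h6,
    by rw [n3_symm2]; exact h7⟩

lemma Big.n0_eq (hp : p.Prime) (hq : q.Prime) (hr : r.Prime) (h : Big a b c U) :
    n0 a b c U = 0 := by
  obtain ⟨hU, hinj, hW⟩ := h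
  by_contra h
  obtain ⟨x, hx, hx1, hx2, hx3⟩ := Multiset.countP_pos.1 (Nat.pos_of_ne_zero h)
  have := hinj x hx1 hx2 hx3
  subst this
  have := minZS_zero_mem U hU hx
  subst this
  simp [W3, wt] at hW
  have e1 : 2 * (q * r) ≤ p * q * r := by nlinarith [hp.two_le, Nat.mul_le_mul_right (q * r) hp.two_le]
  have e2 : 2 * (p * r) ≤ p * q * r := by nlinarith [hp.two_le, Nat.mul_le_mul_right (p * r) hq.two_le]
  have e3 : 2 * (p * q) ≤ p * q * r := by nlinarith [hp.two_le, Nat.mul_le_mul_right (p * q) hr.two_le]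
  omega

lemma pair_inj (hinj : ∀ x, a x = 0 → b x = 0 → c x = 0 → x = 0) :
    ∀ x, a x = 0 → (b.prod c) x = 0 → x = 0 := by
  intro x h1 h2
  simp only [AddMonoidHom.prod_apply, Prod.mk_eq_zero] at h2
  exact hinj x h1 h2.1 h2.2

lemma Big.n1_lt (hp : p.Prime) (hq : q.Prime) (hr : r.Prime) (hB : Big a b c U) :
    n1 a b c U + 1 ≤ p := by
  obtain ⟨hU, hinj, hW⟩ := hB
  by_contra! h
  obtain ⟨h1, h2⟩ := ord_bound hp a (b.prod c) (pair_inj hinj) U hU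
    (fun x => a x ≠ 0 ∧ b x = 0 ∧ c x = 0) (fun x hx => by simp [hx.2.1, hx.2.2])
    (by unfold n1 at h; omega)
  have h3 := card_eq3 a b c U
  have h4 := W3_eq a b c U
  change n1 a b c U = _ at h2
  have z1 : n1 b a c U = 0 := by omega
  have z2 : n1 c a b U = 0 := by omega
  have z3 : n2 a b c U = 0 := by omega
  have z4 : n2 a c b U = 0 := by omega
  have z5 : n2 b c a U = 0 := by omega
  have z6 : n3 a b c U = 0 := by omega
  have z7 : n0 a b c U = 0 := by omega
  rw [z1, z2, z3, z4, z5, z6, z7] at h4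
  have h8 : n1 a b c U ≤ p := by omega
  have e0 := Nat.mul_le_mul_left (q * r) h8
  have e1 : 2 * (q * r) ≤ p * q * r := by nlinarith [hp.two_le, Nat.mul_le_mul_right (q * r) hp.two_le]
  have e2 : 2 * (p * r) ≤ p * q * r := by nlinarith [hp.two_le, Nat.mul_le_mul_right (p * r) hq.two_le]
  have e3 : 2 * (p * q) ≤ p * q * r := by nlinarith [hp.two_le, Nat.mul_le_mul_right (p * q) hr.two_le]
  nlinarith

lemma proj_c10_fst : c10 (AddMonoidHom.fst (ZMod q) (ZMod r)) (AddMonoidHom.snd (ZMod q) (ZMod r))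
    ((U.filter fun x => ¬ (a x ≠ 0 ∧ b x = 0 ∧ c x = 0)).map (b.prod c))
    = n1 b a c U + n2 a b c U := by
  induction U using Multiset.induction_on with
  | empty => simp [c10, n1, n2]
  | cons x U ih =>
    simp only [c10, n1, n2, Multiset.countP_cons] at ih ⊢
    by_cases ha : a x = 0 <;> by_cases hb : b x = 0 <;> by_cases hc : c x = 0 <;>
      simp [ha, hb, hc] at ih ⊢ <;> omega

lemma proj_c10_snd : c10 (AddMonoidHom.snd (ZMod q) (ZMod r)) (AddMonoidHom.fst (ZMod q) (ZMod r))
    ((U.filter fun x => ¬ (a x ≠ 0 ∧ b x = 0 ∧ c x = 0)).map (b.prod c))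
    = n1 c a b U + n2 a c b U := by
  induction U using Multiset.induction_on with
  | empty => simp [c10, n1, n2]
  | cons x U ih =>
    simp only [c10, n1, n2, Multiset.countP_cons] at ih ⊢
    by_cases ha : a x = 0 <;> by_cases hb : b x = 0 <;> by_cases hc : c x = 0 <;>
      simp [ha, hb, hc] at ih ⊢ <;> omega

lemma proj_c11 : c11 (AddMonoidHom.fst (ZMod q) (ZMod r)) (AddMonoidHom.snd (ZMod q) (ZMod r))
    ((U.filter fun x => ¬ (a x ≠ 0 ∧ b x = 0 ∧ c x = 0)).map (b.prod c))
    = n2 b c a U + n3 a b c U := by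
  induction U using Multiset.induction_on with
  | empty => simp [c11, n3, n2]
  | cons x U ih =>
    simp only [c11, n3, n2, Multiset.countP_cons] at ih ⊢
    by_cases ha : a x = 0 <;> by_cases hb : b x = 0 <;> by_cases hc : c x = 0 <;>
      simp [ha, hb, hc] at ih ⊢ <;> omega

lemma proj_c00 : c00 (AddMonoidHom.fst (ZMod q) (ZMod r)) (AddMonoidHom.snd (ZMod q) (ZMod r))
    ((U.filter fun x => ¬ (a x ≠ 0 ∧ b x = 0 ∧ c x = 0)).map (b.prod c))
    = n0 a b c U := by
  induction U using Multiset.induction_on with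
  | empty => simp [c00, n0]
  | cons x U ih =>
    simp only [c00, n0, Multiset.countP_cons] at ih ⊢
    by_cases ha : a x = 0 <;> by_cases hb : b x = 0 <;> by_cases hc : c x = 0 <;>
      simp [ha, hb, hc] at ih ⊢ <;> omega

/-- Pure arithmetic behind `three_full`, first step. -/
lemma arith1 {p q r x y z u v w t : ℕ} (hx : x + 1 = p) (ht : 1 ≤ r * u + q * v + t)
    (hW : 3 * (p * q * r) + 1 ≤ q * r * x + p * r * y + p * q * z + r * u + q * v + p * w + t
      + q * r + p * r + p * q) :
    2 * q * r + 1 ≤ (r * (y + u) + q * (z + v) + (w + t)) + q + r := by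
  subst hx
  by_contra! h
  nlinarith [Nat.mul_le_mul_left x ht, Nat.mul_le_mul_left (x + 1) h]

lemma arith2 {p q r x y z u v w t : ℕ} (hp : 2 ≤ p) (hq : 2 ≤ q) (hr : 2 ≤ r)
    (hx : x + 1 = p) (ht : 1 ≤ r * u + q * v + t)
    (hW : 3 * (p * q * r) + 1 ≤ q * r * x + p * r * y + p * q * z + r * u + q * v + p * w + t
      + q * r + p * r + p * q)
    (h1 : y + u + 1 = q) (h2 : z + v + 1 = r) (h3 : w + t = 1) :
    u = 0 ∧ v = 0 ∧ w = 0 ∧ t = 1 := by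
  have key : x * (r * u + q * v + t) ≤ x * 1 := by
    subst hx h1 h2
    have hw : (x + 1) * w + (x + 1) * t = x + 1 := by rw [← mul_add, h3, mul_one]
    nlinarith
  have key2 := Nat.le_of_mul_le_mul_left key (by omega)
  have hu : u = 0 := by
    by_contra h
    nlinarith [Nat.one_le_iff_ne_zero.2 h]
  have hv : v = 0 := by
    by_contra h
    nlinarith [Nat.one_le_iff_ne_zero.2 h]
  subst hu hv
  simp at ht
  omega

lemma three_full (hp : p.Prime) (hq : q.Prime) (hr : r.Prime) (hB : Big a b c U)
    (hf : p ≤ n1 a b c U + 1) : Good a b c U := by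
  have hlt := hB.n1_lt hp hq hr
  have h0 := hB.n0_eq hp hq hr
  obtain ⟨hU, hinj, hW⟩ := hB
  have h4 := W3_eq a b c U
  have h3 := card_eq3 a b c U
  have hp2 := hp.two_le
  have hq2 := hq.two_le
  have hr2 := hr.two_le
  set A := U.filter (fun x => a x ≠ 0 ∧ b x = 0 ∧ c x = 0) with hA
  set R := U.filter (fun x => ¬ (a x ≠ 0 ∧ b x = 0 ∧ c x = 0)) with hR
  have hAR : A + R = U := Multiset.filter_add_not _ _
  have hAc : Multiset.card A = n1 a b c U := by
    rw [hA, ← Multiset.countP_eq_card_filter]; rfl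
  have hcard : Multiset.card A + Multiset.card R = Multiset.card U := by
    rw [← hAR, Multiset.card_add]
  have hAmem : ∀ x ∈ A, a x ≠ 0 ∧ (b.prod c) x = 0 := fun x hx => by
    have := (Multiset.mem_filter.1 hx).2
    simp [this]
  have hA0 : A ≠ 0 := by
    intro h; rw [h] at hAc; simp at hAc; omega
  have hR0 : R ≠ 0 := by
    intro h; rw [h] at hcard; simp at hcard
    have z1 : n1 b a c U = 0 := by omega
    have z2 : n1 c a b U = 0 := by omega
    have z3 : n2 a b c U = 0 := by omega
    have z4 : n2 a c b U = 0 := by omega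
    have z5 : n2 b c a U = 0 := by omega
    have z6 : n3 a b c U = 0 := by omega
    rw [z1, z2, z3, z4, z5, z6, h0] at h4
    have e0 := Nat.mul_le_mul_left (q * r) hlt
    have e1 : 2 * (q * r) ≤ p * q * r := by nlinarith [Nat.mul_le_mul_right (q * r) hp2]
    have e2 : 2 * (p * r) ≤ p * q * r := by nlinarith [Nat.mul_le_mul_right (p * r) hq2]
    have e3 : 2 * (p * q) ≤ p * q * r := by nlinarith [Nat.mul_le_mul_right (p * q) hr2]
    nlinarith
  have hU' := hU
  rw [← hAR] at hU'
  have hV := proj hp a (b.prod c) (pair_inj hinj) A R hU' hAmem (by omega) hR0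
  obtain ⟨x, hx, hx'⟩ := exists_nonzero a (b.prod c) (pair_inj hinj) A R hU'
    (fun x hx => (hAmem x hx).2) hA0 hR0
  have hX : 1 ≤ n2 a b c U + n2 a c b U + n3 a b c U := by
    rw [hR, Multiset.mem_filter] at hx
    by_cases hb : b x = 0
    · have hc : c x ≠ 0 := fun h => hx.2 ⟨hx', hb, h⟩
      have : 0 < n2 a c b U := Multiset.countP_pos.2 ⟨x, hx.1, hx', hc, hb⟩
      omega
    · by_cases hc : c x = 0
      · have : 0 < n2 a b c U := Multiset.countP_pos.2 ⟨x, hx.1, hx', hb, hc⟩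
        omega
      · have : 0 < n3 a b c U := Multiset.countP_pos.2 ⟨x, hx.1, hx', hb, hc⟩
        omega
  have hX' : 1 ≤ r * n2 a b c U + q * n2 a c b U + n3 a b c U := by nlinarith
  have hx1 : n1 a b c U + 1 = p := by omega
  rw [h4, h0, mul_zero, add_zero] at hW
  have ht := two hq hr (AddMonoidHom.fst (ZMod q) (ZMod r)) (AddMonoidHom.snd (ZMod q) (ZMod r))
    (fun x h1 h2 => Prod.ext h1 h2) _ _ rfl hV
    (by
      rw [W2_eq, hR, proj_c10_fst, proj_c10_snd, proj_c11, proj_c00, h0, mul_zero, add_zero]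
      exact arith1 hx1 hX' hW)
  rw [hR, proj_c10_fst, proj_c10_snd, proj_c11] at ht
  obtain ⟨t1, t2, t3⟩ := ht
  obtain ⟨z1, z2, z3, z4⟩ := arith2 hp2 hq2 hr2 hx1 hX' hW t1 t2 t3
  exact ⟨hx1, by omega, by omega, z1, z2, z3, z4⟩

/-- Inductive merging step at the first prime. -/
lemma merge_step (hp : p.Prime) (hn : n1 a b c U + 1 < p) (hB : Big a b c U)
    (ih : ∀ U' : Multiset G, Multiset.card U' < Multiset.card U → Big a b c U' → Good a b c U')
    (P : G → Prop) [DecidablePred P] (hP : ∀ x, P x → a x ≠ 0) (m : ℕ)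
    (hm : ∀ x, P x → wt q b x * wt r c x ≤ m)
    (hs : ∀ T : Multiset G, (∀ x ∈ T, P x) → m ≤ wt q b T.sum * wt r c T.sum) :
    U.countP P + 1 ≤ p := by
  by_contra! hc
  obtain ⟨T, R, rfl, hT0, hTp, hT2, hTs, hTP⟩ := exists_merge hp a U P hP (by omega)
  have hm' := merge T R hT0 hB.1
  have hWT : W3 a b c T ≤ p * m := by
    have : W3 a b c T ≤ Multiset.card T • m := by
      unfold W3
      rw [← Multiset.card_map (fun x => wt p a x * wt q b x * wt r c x) T]
      apply Multiset.sum_le_card_nsmul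
      intro y hy
      obtain ⟨x, hx, rfl⟩ := Multiset.mem_map.1 hy
      have : wt p a x = 1 := by simp [wt, hP x (hTP x hx)]
      rw [this, one_mul]
      exact hm x (hTP x hx)
    exact this.trans (Nat.mul_le_mul_right m hTp)
  have hWU : W3 a b c (T + R) = W3 a b c T + W3 a b c R := by simp [W3]
  have hWU' : W3 a b c (T.sum ::ₘ R) = wt p a T.sum * wt q b T.sum * wt r c T.sum
    + W3 a b c R := by simp [W3]
  have hws : p * m ≤ wt p a T.sum * wt q b T.sum * wt r c T.sum := by
    have : wt p a T.sum = p := by simp [wt, hTs]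
    rw [this, mul_assoc]
    exact Nat.mul_le_mul_left p (hs T hTP)
  have hW := hB.2.2
  have := (ih (T.sum ::ₘ R) (by simp; omega) ⟨hm', hB.2.1, by omega⟩).1
  have hle : n1 a b c (T.sum ::ₘ R) ≤ n1 a b c (T + R) := by
    simp [n1, hTs]
  omega

lemma merge_n3 (hp : p.Prime) (hq : q.Prime) (hr : r.Prime)
    (hn : n1 a b c U + 1 < p) (hB : Big a b c U)
    (ih : ∀ U' : Multiset G, Multiset.card U' < Multiset.card U → Big a b c U' → Good a b c U') :
    n3 a b c U + 1 ≤ p :=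
  merge_step hp hn hB ih _ (fun x hx => hx.1) 1
    (fun x hx => by simp [wt, hx.2.1, hx.2.2])
    (fun T _ => Nat.mul_pos (wt_pos hq b _) (wt_pos hr c _))

lemma merge_n2 (hp : p.Prime) (hq : q.Prime)
    (hn : n1 a b c U + 1 < p) (hB : Big a b c U)
    (ih : ∀ U' : Multiset G, Multiset.card U' < Multiset.card U → Big a b c U' → Good a b c U') :
    n2 a b c U + 1 ≤ p :=
  merge_step hp hn hB ih _ (fun x hx => hx.1) r
    (fun x hx => by simp [wt, hx.2.1, hx.2.2])
    (fun T hT => by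
      have : wt r c T.sum = r := by simp [wt, hom_sum_zero c T fun x hx => (hT x hx).2.2]
      rw [this]
      exact Nat.le_mul_of_pos_left _ (wt_pos hq b _))

lemma three_sorted (hp : p.Prime) (hq : q.Prime) (hr : r.Prime) (hpq : p ≤ q) (hqr : q ≤ r) :
    ∀ (n : ℕ) (U : Multiset G), Multiset.card U = n → Big a b c U → Good a b c U := by
  intro n
  induction n using Nat.strong_induction_on with
  | _ n ih =>
  intro U hn hB
  subst hn
  replace ih : ∀ U' : Multiset G, Multiset.card U' < Multiset.card U → Big a b c U' →
    Good a b c U' := fun U' h => ih _ h U' rfl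
  by_cases h1 : p ≤ n1 a b c U + 1
  · exact three_full hp hq hr hB h1
  by_cases h2 : q ≤ n1 b a c U + 1
  · exact (three_full hq hp hr hB.symm1 h2).symm1
  by_cases h3 : r ≤ n1 c a b U + 1
  · exact (three_full hr hp hq hB.symm2.symm1 h3).symm1.symm2
  exfalso
  rw [not_le] at h1 h2 h3
  have m1 := merge_n3 hp hq hr h1 hB ih
  have m2 := merge_n2 hp hq h1 hB ih
  have m3 := merge_n2 hp hr (by rwa [n1_symm]) hB.symm2
    (fun U' hc hB' => (ih U' hc hB'.symm2).symm2)
  have m4 := merge_n2 (a := b) (b := c) (c := a) hq hr (by rwa [n1_symm]) hB.symm1.symm2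
    (fun U' hc hB' => (ih U' hc hB'.symm2.symm1).symm1.symm2)
  have h0 := hB.n0_eq hp hq hr
  have h4 := W3_eq a b c U
  have hW := hB.2.2
  rw [h4, h0, mul_zero, add_zero] at hW
  have e1 := Nat.mul_le_mul_left (q * r) (show n1 a b c U + 2 ≤ p by omega)
  have e2 := Nat.mul_le_mul_left (p * r) (show n1 b a c U + 2 ≤ q by omega)
  have e3 := Nat.mul_le_mul_left (p * q) (show n1 c a b U + 2 ≤ r by omega)
  have e4 := Nat.mul_le_mul_left r m2
  have e5 := Nat.mul_le_mul_left q m3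
  have e6 := Nat.mul_le_mul_left p m4
  have e7 : p * q ≤ q * r := by nlinarith
  nlinarith [hp.two_le]

lemma three (hp : p.Prime) (hq : q.Prime) (hr : r.Prime) (hB : Big a b c U) : Good a b c U := by
  rcases le_total p q with h1 | h1 <;> rcases le_total q r with h2 | h2 <;>
    rcases le_total p r with h3 | h3
  · exact three_sorted hp hq hr h1 h2 _ U rfl hB
  · exact three_sorted hp hq hr h1 h2 _ U rfl hB
  · exact (three_sorted hp hr hq h3 h2 _ U rfl hB.symm2).symm2
  · exact (three_sorted hr hp hq h3 h1 _ U rfl hB.symm2.symm1).symm1.symm2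
  · exact (three_sorted hq hp hr h1 h3 _ U rfl hB.symm1).symm1
  · exact (three_sorted hq hr hp h2 h3 _ U rfl hB.symm1.symm2).symm2.symm1
  · exact (three_sorted hr hq hp h2 h1 _ U rfl hB.symm1.symm2.symm1).symm1.symm2.symm1
  · exact (three_sorted hr hq hp h2 h1 _ U rfl hB.symm1.symm2.symm1).symm1.symm2.symm1

end three

section final

variable {p q r : ℕ}

def pa (p q r : ℕ) : ZMod p × ZMod q × ZMod r →+ ZMod p :=
  AddMonoidHom.fst (ZMod p) (ZMod q × ZMod r)

def pb (p q r : ℕ) : ZMod p × ZMod q × ZMod r →+ ZMod q :=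
  (AddMonoidHom.fst (ZMod q) (ZMod r)).comp (AddMonoidHom.snd (ZMod p) (ZMod q × ZMod r))

def pc (p q r : ℕ) : ZMod p × ZMod q × ZMod r →+ ZMod r :=
  (AddMonoidHom.snd (ZMod q) (ZMod r)).comp (AddMonoidHom.snd (ZMod p) (ZMod q × ZMod r))

@[simp] lemma pa_apply (x : ZMod p × ZMod q × ZMod r) : pa p q r x = x.1 := rfl
@[simp] lemma pb_apply (x : ZMod p × ZMod q × ZMod r) : pb p q r x = x.2.1 := rfl
@[simp] lemma pc_apply (x : ZMod p × ZMod q × ZMod r) : pc p q r x = x.2.2 := rfl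

lemma joint_inj (x : ZMod p × ZMod q × ZMod r) (h1 : pa p q r x = 0) (h2 : pb p q r x = 0)
    (h3 : pc p q r x = 0) : x = 0 := Prod.ext h1 (Prod.ext h2 h3)

lemma order_zmod (hp : p.Prime) (x : ZMod p) : addOrderOf x = if x = 0 then 1 else p := by
  have : Fact p.Prime := ⟨hp⟩
  split_ifs with h
  · simp [h]
  · exact addOrderOf_eq_prime (by simp) h

lemma order_prod (hp : p.Prime) (hq : q.Prime) (hr : r.Prime)
    (hpq : p ≠ q) (hpr : p ≠ r) (hqr : q ≠ r) (x : ZMod p × ZMod q × ZMod r) :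
    addOrderOf x = (if x.1 = 0 then 1 else p) * (if x.2.1 = 0 then 1 else q) *
      (if x.2.2 = 0 then 1 else r) := by
  have c1 : Nat.Coprime p q := (Nat.coprime_primes hp hq).2 hpq
  have c2 : Nat.Coprime p r := (Nat.coprime_primes hp hr).2 hpr
  have c3 : Nat.Coprime q r := (Nat.coprime_primes hq hr).2 hqr
  rw [Prod.addOrderOf, Prod.addOrderOf, order_zmod hp, order_zmod hq, order_zmod hr]
  split_ifs <;> simp [c1.lcm_eq_mul, c2.lcm_eq_mul, c3.lcm_eq_mul, mul_assoc]
  exact (Nat.Coprime.mul_right c1 c2).lcm_eq_mul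

lemma cross_eq (hp : p.Prime) (hq : q.Prime) (hr : r.Prime)
    (hpq : p ≠ q) (hpr : p ≠ r) (hqr : q ≠ r) (U : Multiset (ZMod p × ZMod q × ZMod r)) :
    crossNum U * (p * q * r) = (W3 (pa p q r) (pb p q r) (pc p q r) U : ℝ) := by
  have hp0 : (p : ℝ) ≠ 0 := by exact_mod_cast hp.ne_zero
  have hq0 : (q : ℝ) ≠ 0 := by exact_mod_cast hq.ne_zero
  have hr0 : (r : ℝ) ≠ 0 := by exact_mod_cast hr.ne_zero
  induction U using Multiset.induction_on with
  | empty => simp [crossNum, W3]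
  | cons x U ih =>
    simp only [crossNum, W3, Multiset.map_cons, Multiset.sum_cons, Nat.cast_add, add_mul] at ih ⊢
    rw [ih, order_prod hp hq hr hpq hpr hqr]
    congr 1
    by_cases ha : x.1 = 0 <;> by_cases hb : x.2.1 = 0 <;> by_cases hc : x.2.2 = 0 <;>
      simp [wt, ha, hb, hc] <;> field_simp

lemma W3_le (hp : p.Prime) (hq : q.Prime) (hr : r.Prime)
    (U : Multiset (ZMod p × ZMod q × ZMod r)) (hU : IsMinZeroSum U) :
    W3 (pa p q r) (pb p q r) (pc p q r) U + q * r + p * r + p * q ≤ 3 * (p * q * r) + 1 := by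
  by_contra! h
  have hB : Big (pa p q r) (pb p q r) (pc p q r) U := ⟨hU, joint_inj, h.le⟩
  have h0 := hB.n0_eq hp hq hr
  obtain ⟨h1, h2, h3, h4, h5, h6, h7⟩ := three hp hq hr hB
  have e := W3_eq (pa p q r) (pb p q r) (pc p q r) U
  rw [h0, h4, h5, h6, h7] at e
  have e1 : q * r * n1 (pa p q r) (pb p q r) (pc p q r) U + q * r = p * q * r := by
    conv_rhs => rw [← h1]
    ring
  have e2 : p * r * n1 (pb p q r) (pa p q r) (pc p q r) U + p * r = p * q * r := by
    conv_rhs => rw [← h2]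
    ring
  have e3 : p * q * n1 (pc p q r) (pa p q r) (pb p q r) U + p * q = p * q * r := by
    conv_rhs => rw [← h3]
    ring
  omega

lemma sum_count {G : Type*} [AddCommGroup G] (f : G →+ ZMod p) (X : Multiset G)
    (hX : ∀ x ∈ X, f x = 0 ∨ f x = 1) (h01 : (1 : ZMod p) ≠ 0) :
    f X.sum = (X.countP (fun x => f x ≠ 0) : ℕ) := by
  induction X using Multiset.induction_on with
  | empty => simp
  | cons x X ih =>
    rw [Multiset.sum_cons, map_add, ih fun y hy => hX y (Multiset.mem_cons_of_mem hy),
      Multiset.countP_cons]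
    rcases hX x (Multiset.mem_cons_self _ _) with h | h <;> simp [h, h01, add_comm]

lemma all_zero {G : Type*} [AddCommGroup G] (hp : p.Prime) (f : G →+ ZMod p) (X Z : Multiset G)
    (hXZ : X ≤ Z) (hZ : ∀ x ∈ Z, f x = 0 ∨ f x = 1) (hc : Z.countP (fun x => f x ≠ 0) < p)
    (hX : X.sum = 0) : ∀ x ∈ X, f x = 0 := by
  have : Fact p.Prime := ⟨hp⟩
  have h1 := sum_count f X (fun x hx => hZ x (Multiset.mem_of_le hXZ hx)) one_ne_zero
  rw [hX, map_zero] at h1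
  have h2 : p ∣ X.countP (fun x => f x ≠ 0) := (ZMod.natCast_eq_zero_iff _ _).1 h1.symm
  have h3 := Multiset.countP_le_of_le (fun x => f x ≠ 0) hXZ
  have h4 := Nat.eq_zero_of_dvd_of_lt h2 (by omega)
  rw [Multiset.countP_eq_zero] at h4
  intro x hx
  exact not_not.1 (h4 x hx)

def rest (p q r : ℕ) : Multiset (ZMod p × ZMod q × ZMod r) :=
  Multiset.replicate (p - 1) (1, 0, 0) + Multiset.replicate (q - 1) (0, 1, 0) +
    Multiset.replicate (r - 1) (0, 0, 1)

lemma mem_rest {x : ZMod p × ZMod q × ZMod r} (hx : x ∈ rest p q r) :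
    x = (1, 0, 0) ∨ x = (0, 1, 0) ∨ x = (0, 0, 1) := by
  simp only [rest, Multiset.mem_add, Multiset.mem_replicate] at hx
  tauto

lemma countP_rep {α : Type*} (P : α → Prop) [DecidablePred P] (n : ℕ) (x : α) :
    (Multiset.replicate n x).countP P = if P x then n else 0 := by
  induction n with
  | zero => simp
  | succ n ih =>
    rw [Multiset.replicate_succ, Multiset.countP_cons, ih]
    split_ifs <;> rfl

lemma rest_free (hp : p.Prime) (hq : q.Prime) (hr : r.Prime)
    (X : Multiset (ZMod p × ZMod q × ZMod r)) (hX : X ≤ rest p q r) (hs : X.sum = 0) : X = 0 := by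
  have : Fact p.Prime := ⟨hp⟩
  have : Fact q.Prime := ⟨hq⟩
  have : Fact r.Prime := ⟨hr⟩
  have hp1 := hp.pos
  have hq1 := hq.pos
  have hr1 := hr.pos
  have ha := all_zero hp (pa p q r) X _ hX
    (fun x hx => by rcases mem_rest hx with rfl | rfl | rfl <;> simp)
    (by
      rw [rest, Multiset.countP_add, Multiset.countP_add, countP_rep, countP_rep, countP_rep]
      simp [hp1]) hs
  have hb := all_zero hq (pb p q r) X _ hX
    (fun x hx => by rcases mem_rest hx with rfl | rfl | rfl <;> simp)
    (by
      rw [rest, Multiset.countP_add, Multiset.countP_add, countP_rep, countP_rep, countP_rep]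
      simp [hq1]) hs
  have hc := all_zero hr (pc p q r) X _ hX
    (fun x hx => by rcases mem_rest hx with rfl | rfl | rfl <;> simp)
    (by
      rw [rest, Multiset.countP_add, Multiset.countP_add, countP_rep, countP_rep, countP_rep]
      simp [hr1]) hs
  apply Multiset.eq_zero_of_forall_notMem
  intro x hx
  have := joint_inj x (ha x hx) (hb x hx) (hc x hx)
  subst this
  rcases mem_rest (Multiset.mem_of_le hX hx) with h | h | h <;> simp [Prod.ext_iff] at h

lemma example_min (hp : p.Prime) (hq : q.Prime) (hr : r.Prime) :
    IsMinZeroSum (((1, 1, 1) : ZMod p × ZMod q × ZMod r) ::ₘ rest p q r) := by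
  have hs : (((1, 1, 1) : ZMod p × ZMod q × ZMod r) ::ₘ rest p q r).sum = 0 := by
    simp [rest, Nat.cast_sub hp.one_le, Nat.cast_sub hq.one_le, Nat.cast_sub hr.one_le]
  rw [minZS_iff]
  refine ⟨by simp, hs, ?_⟩
  intro X Y hXY hX
  have hY : Y.sum = 0 := by
    rw [hXY, Multiset.sum_add, hX, zero_add] at hs
    exact hs
  have hm : ((1, 1, 1) : ZMod p × ZMod q × ZMod r) ∈ X + Y := by
    rw [← hXY]; exact Multiset.mem_cons_self _ _
  rcases Multiset.mem_add.1 hm with hm | hm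
  · obtain ⟨X1, rfl⟩ := Multiset.exists_cons_of_mem hm
    rw [Multiset.cons_add, Multiset.cons_inj_right] at hXY
    exact Or.inr (rest_free hp hq hr Y (by rw [hXY]; exact Multiset.le_add_left _ _) hY)
  · obtain ⟨Y1, rfl⟩ := Multiset.exists_cons_of_mem hm
    rw [Multiset.add_cons, Multiset.cons_inj_right] at hXY
    exact Or.inl (rest_free hp hq hr X (by rw [hXY]; exact Multiset.le_add_right _ _) hX)

lemma example_W3 (hp : p.Prime) (hq : q.Prime) (hr : r.Prime) :
    W3 (pa p q r) (pb p q r) (pc p q r) ((1, 1, 1) ::ₘ rest p q r) + q * r + p * r + p * q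
      = 3 * (p * q * r) + 1 := by
  have : Fact p.Prime := ⟨hp⟩
  have : Fact q.Prime := ⟨hq⟩
  have : Fact r.Prime := ⟨hr⟩
  simp [W3, rest, wt]
  obtain ⟨p', hp'⟩ := Nat.exists_eq_add_of_le hp.one_le
  obtain ⟨q', hq'⟩ := Nat.exists_eq_add_of_le hq.one_le
  obtain ⟨r', hr'⟩ := Nat.exists_eq_add_of_le hr.one_le
  rw [show p - 1 = p' by omega, show q - 1 = q' by omega, show r - 1 = r' by omega, hp', hq', hr']
  ring

lemma big_of_max (hp : p.Prime) (hq : q.Prime) (hr : r.Prime)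
    (hpq : p ≠ q) (hpr : p ≠ r) (hqr : q ≠ r)
    (U : Multiset (ZMod p × ZMod q × ZMod r)) (hU : IsMinZeroSum U)
    (hmax : crossNum U = bigK (ZMod p × ZMod q × ZMod r)) :
    Big (pa p q r) (pb p q r) (pc p q r) U := by
  have hpos : (0 : ℝ) < p * q * r := by
    have h1 : (0 : ℝ) < p := by exact_mod_cast hp.pos
    have h2 : (0 : ℝ) < q := by exact_mod_cast hq.pos
    have h3 : (0 : ℝ) < r := by exact_mod_cast hr.pos
    positivity
  refine ⟨hU, joint_inj, ?_⟩
  have hex := example_W3 hp hq hr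
  have hle : crossNum (((1, 1, 1) : ZMod p × ZMod q × ZMod r) ::ₘ rest p q r) ≤ crossNum U := by
    rw [hmax]
    apply le_csSup
    · refine ⟨((3 * (p * q * r) + 1 : ℕ) : ℝ), ?_⟩
      rintro _ ⟨S, hS, rfl⟩
      have h1 := W3_le hp hq hr S hS
      have h2 := cross_eq hp hq hr hpq hpr hqr S
      have h3 : (W3 (pa p q r) (pb p q r) (pc p q r) S : ℝ) ≤ ((3 * (p * q * r) + 1 : ℕ) : ℝ) := by
        exact_mod_cast (by omega)
      have h5 : 0 ≤ crossNum S := by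
        apply Multiset.sum_nonneg
        intro y hy
        obtain ⟨x, -, rfl⟩ := Multiset.mem_map.1 hy
        positivity
      have h6 : (1 : ℝ) ≤ p * q * r := by
        exact_mod_cast Nat.mul_pos (Nat.mul_pos hp.pos hq.pos) hr.pos
      nlinarith
    · exact ⟨_, example_min hp hq hr, rfl⟩
  have h1 := mul_le_mul_of_nonneg_right hle hpos.le
  rw [cross_eq hp hq hr hpq hpr hqr, cross_eq hp hq hr hpq hpr hqr] at h1
  have h2 : W3 (pa p q r) (pb p q r) (pc p q r) ((1, 1, 1) ::ₘ rest p q r) ≤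
    W3 (pa p q r) (pb p q r) (pc p q r) U := by exact_mod_cast h1
  omega

end final

end CrossAux

/-- For distinct primes `p, q, r` and `G = C_p ⊕ C_q ⊕ C_r`: every minimal zero-sum
sequence `U` over `G` with `k(U) = K(G)` has the form `U = g + Up + Uq + Ur` where `g`
is a single element of order `pqr` and `Up`, `Uq`, `Ur` are zero-sum free sequences
supported on the `p`-, `q`- and `r`-primary components of `G` respectively. -/
theorem maximal_minimal_zero_sum_structure_three_primes
    (p q r : ℕ) (hp : p.Prime) (hq : q.Prime) (hr : r.Prime)
    (hpq : p ≠ q) (hpr : p ≠ r) (hqr : q ≠ r)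
    (U : Multiset (ZMod p × ZMod q × ZMod r)) (hU : IsMinZeroSum U)
    (hmax : crossNum U = bigK (ZMod p × ZMod q × ZMod r)) :
    ∃ (g : ZMod p × ZMod q × ZMod r) (Up Uq Ur : Multiset (ZMod p × ZMod q × ZMod r)),
      U = g ::ₘ (Up + Uq + Ur) ∧ addOrderOf g = p * q * r ∧
        (∀ x ∈ Up, x.2 = 0) ∧
        (∀ x ∈ Uq, x.1 = 0 ∧ x.2.2 = 0) ∧
        (∀ x ∈ Ur, x.1 = 0 ∧ x.2.1 = 0) ∧
        IsZeroSumFree Up ∧ IsZeroSumFree Uq ∧ IsZeroSumFree Ur := by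
  classical
  have hB := CrossAux.big_of_max hp hq hr hpq hpr hqr U hU hmax
  have h0 := hB.n0_eq hp hq hr
  obtain ⟨-, -, -, h4, h5, h6, h7⟩ := CrossAux.three hp hq hr hB
  unfold CrossAux.n0 at h0
  unfold CrossAux.n2 at h4 h5 h6
  unfold CrossAux.n3 at h7
  rw [Multiset.countP_eq_zero] at h0 h4 h5 h6
  simp only [CrossAux.pa_apply, CrossAux.pb_apply, CrossAux.pc_apply] at h0 h4 h5 h6
  obtain ⟨g, hg, hg1, hg2, hg3⟩ := Multiset.countP_pos.1 (lt_of_lt_of_eq Nat.one_pos h7.symm)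
  obtain ⟨R, rfl⟩ := Multiset.exists_cons_of_mem hg
  have hR7 : ∀ x ∈ R, ¬ (x.1 ≠ 0 ∧ x.2.1 ≠ 0 ∧ x.2.2 ≠ 0) := by
    rw [Multiset.countP_cons_of_pos _ ⟨hg1, hg2, hg3⟩] at h7
    exact Multiset.countP_eq_zero.1 (Nat.succ.inj h7)
  have hfree : ∀ T ≤ R, IsZeroSumFree T := by
    intro T hT X hX hX0
    refine hU.2.2 X ((hX.trans hT).trans (Multiset.le_cons_self _ _)) hX0 ?_
    intro he
    have h1 := Multiset.card_le_card (hX.trans hT)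
    rw [he, Multiset.card_cons] at h1
    omega
  set R1 := R.filter (fun x => ¬ x.1 ≠ 0) with hR1
  have e1 : R.filter (fun x => x.1 ≠ 0) + R1 = R := Multiset.filter_add_not _ _
  have e2 : R1.filter (fun x => x.2.1 ≠ 0) + R1.filter (fun x => ¬ x.2.1 ≠ 0) = R1 :=
    Multiset.filter_add_not _ _
  have l1 : R1 ≤ R := Multiset.filter_le _ _
  refine ⟨g, R.filter (fun x => x.1 ≠ 0), R1.filter (fun x => x.2.1 ≠ 0),
    R1.filter (fun x => ¬ x.2.1 ≠ 0), ?_, ?_, ?_, ?_, ?_,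
    hfree _ (Multiset.filter_le _ _), hfree _ ((Multiset.filter_le _ _).trans l1),
    hfree _ ((Multiset.filter_le _ _).trans l1)⟩
  · rw [add_assoc, e2, e1]
  · rw [CrossAux.order_prod hp hq hr hpq hpr hqr]
    rw [if_neg (show ¬ g.1 = 0 from hg1), if_neg (show ¬ g.2.1 = 0 from hg2),
      if_neg (show ¬ g.2.2 = 0 from hg3)]
  · intro x hx
    obtain ⟨hx, hx1⟩ := Multiset.mem_filter.1 hx
    have hxU := Multiset.mem_cons_of_mem (b := g) hx
    have t7 := hR7 x hx
    have t4 := h4 x hxU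
    have t5 := h5 x hxU
    apply Prod.ext
    · change x.2.1 = 0
      tauto
    · change x.2.2 = 0
      tauto
  · intro x hx
    obtain ⟨hx, hx2⟩ := Multiset.mem_filter.1 hx
    obtain ⟨hx, hx1⟩ := Multiset.mem_filter.1 hx
    have t6 := h6 x (Multiset.mem_cons_of_mem hx)
    tauto
  · intro x hx
    obtain ⟨hx, hx2⟩ := Multiset.mem_filter.1 hx
    obtain ⟨hx, hx1⟩ := Multiset.mem_filter.1 hx
    tauto
end
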